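/- arXiv:2603.24884 — 3 statements merged into one kernel-verified Lean document; each statement's English description precedes it below -/
import Mathlib

section
/- For every integer n ≥ 2, let B = {a^ε m^δ c^d : ε, δ ∈ {0,1}, 0 ≤ d < p} if n is even, and B = {a^ε m^δ c^d : ε, δ ∈ {0,1}, 0 ≤ d < p−1} ∪ {c^{p−1}, a c^{p−1} + m c^{p−1}} if n is odd. Then every element of B lies in OS_n^{S_n} and B is a basis of OS_n^{S_n} as a ℚ-vector space. -/
noncomputable section

/-- Unordered pairs of distinct elements of `{1, …, n+1}` (as `Fin (n+1)`). -/
abbrev OSidx (n : ℕ) := {s : Sym2 (Fin (n+1)) // ¬ s.IsDiag}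

/-- The exterior algebra over `ℚ` on generators indexed by unordered pairs of distinct
elements of `{1, …, n+1}`. -/
abbrev OSamb (n : ℕ) := ExteriorAlgebra ℚ (OSidx n →₀ ℚ)

/-- The generator `e_{ij} = e_{ji}` of the ambient exterior algebra. -/
def eAmb (n : ℕ) (i j : Fin (n+1)) (h : i ≠ j) : OSamb n :=
  ExteriorAlgebra.ι ℚ (Finsupp.single ⟨s(i,j), by simp [Sym2.mk_isDiag_iff, h]⟩ 1)

/-- The Orlik–Solomon relations for the braid arrangement. -/
inductive OSRel (n : ℕ) : OSamb n → OSamb n → Prop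
  | rel (i j k : Fin (n+1)) (hij : i ≠ j) (hjk : j ≠ k) (hik : i ≠ k) :
      OSRel n (eAmb n i k hik * eAmb n j k hjk - eAmb n i j hij * eAmb n j k hjk
        + eAmb n i j hij * eAmb n i k hik) 0

/-- The Orlik–Solomon algebra `OS_n` of the braid arrangement `A_n`. -/
abbrev OS (n : ℕ) := RingQuot (OSRel n)

/-- The generator `e_{ij}` of `OS_n`, defined to be `0` when `i = j`. -/
def eOS (n : ℕ) (i j : Fin (n+1)) : OS n :=
  if h : i = j then 0 else RingQuot.mkAlgHom ℚ (OSRel n) (eAmb n i j h)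

/-- `a = Σ_{1 ≤ i < j ≤ n} e_{ij}`. -/
def aOS (n : ℕ) : OS n :=
  ∑ p ∈ Finset.univ.filter (fun p : Fin n × Fin n => p.1 < p.2),
    eOS n p.1.castSucc p.2.castSucc

/-- `m = Σ_{1 ≤ i ≤ n} e_{i,n+1}`. -/
def mOS (n : ℕ) : OS n := ∑ i : Fin n, eOS n i.castSucc (Fin.last n)

/-- `c = Σ_{1 ≤ i < j ≤ n} (e_{ij} e_{i,n+1} + e_{ij} e_{j,n+1})`. -/
def cOS (n : ℕ) : OS n :=
  ∑ p ∈ Finset.univ.filter (fun p : Fin n × Fin n => p.1 < p.2),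
    (eOS n p.1.castSucc p.2.castSucc * eOS n p.1.castSucc (Fin.last n)
      + eOS n p.1.castSucc p.2.castSucc * eOS n p.2.castSucc (Fin.last n))

/-- `g = a·m − p·c` with `p = ⌊(n+1)/2⌋`. -/
def gOS (n : ℕ) : OS n := aOS n * mOS n - ((n+1)/2 : ℕ) • cOS n

/-- The action of a permutation on the index set of unordered pairs. -/
def OSpermIdx (n : ℕ) (σ : Equiv.Perm (Fin (n+1))) : OSidx n → OSidx n :=
  fun s => ⟨Sym2.map σ s.1, by
    obtain ⟨⟨x, y⟩, hs⟩ := s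
    intro hd
    rw [Sym2.map_pair_eq, Sym2.mk_isDiag_iff] at hd
    exact hs (Sym2.mk_isDiag_iff.mpr (σ.injective hd))⟩

/-- The algebra endomorphism of the ambient exterior algebra induced by a permutation. -/
def OSpermAmb (n : ℕ) (σ : Equiv.Perm (Fin (n+1))) : OSamb n →ₐ[ℚ] OSamb n :=
  ExteriorAlgebra.lift ℚ
    ⟨(ExteriorAlgebra.ι ℚ).comp (Finsupp.lmapDomain ℚ ℚ (OSpermIdx n σ)),
      fun m => by simp [ExteriorAlgebra.ι_sq_zero]⟩

lemma OSpermAmb_e (n : ℕ) (σ : Equiv.Perm (Fin (n+1))) (i j : Fin (n+1)) (h : i ≠ j) :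
    OSpermAmb n σ (eAmb n i j h) = eAmb n (σ i) (σ j) (fun hh => h (σ.injective hh)) := by
  simp only [OSpermAmb, eAmb, ExteriorAlgebra.lift_ι_apply, LinearMap.comp_apply,
    Finsupp.lmapDomain_apply, Finsupp.mapDomain_single]
  congr 1

/-- The algebra endomorphism of `OS_n` induced by a permutation of `{1, …, n+1}`. -/
def OSperm (n : ℕ) (σ : Equiv.Perm (Fin (n+1))) : OS n →ₐ[ℚ] OS n :=
  RingQuot.liftAlgHom ℚ
    ⟨(RingQuot.mkAlgHom ℚ (OSRel n)).comp (OSpermAmb n σ), by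
      intro x y h
      cases h with
      | rel i j k hij hjk hik =>
        simp only [AlgHom.comp_apply, map_sub, map_add, map_mul, map_zero, OSpermAmb_e]
        have := RingQuot.mkAlgHom_rel ℚ (OSRel.rel (σ i) (σ j) (σ k)
          (fun hh => hij (σ.injective hh)) (fun hh => hjk (σ.injective hh))
          (fun hh => hik (σ.injective hh)))
        simpa [map_sub, map_add, map_mul] using this⟩

/-- The subalgebra of `S_n`-invariants of `OS_n`, where `S_n` is the subgroup of permutations
of `{1, …, n+1}` fixing `n+1`. -/
def OSinv (n : ℕ) : Subalgebra ℚ (OS n) where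
  carrier := {x | ∀ σ : Equiv.Perm (Fin (n+1)), σ (Fin.last n) = Fin.last n → OSperm n σ x = x}
  mul_mem' := fun hx hy σ hσ => by rw [map_mul, hx σ hσ, hy σ hσ]
  add_mem' := fun hx hy σ hσ => by rw [map_add, hx σ hσ, hy σ hσ]
  one_mem' := fun σ _ => map_one _
  zero_mem' := fun σ _ => map_zero _
  algebraMap_mem' := fun r σ hσ => AlgHom.commutes _ r

/-- The subalgebra of `S_{n+1}`-invariants of `OS_n`. -/
def OSinvFull (n : ℕ) : Subalgebra ℚ (OS n) where
  carrier := {x | ∀ σ : Equiv.Perm (Fin (n+1)), OSperm n σ x = x}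
  mul_mem' := fun hx hy σ => by rw [map_mul, hx σ, hy σ]
  add_mem' := fun hx hy σ => by rw [map_add, hx σ, hy σ]
  one_mem' := fun σ => map_one _
  zero_mem' := fun σ => map_zero _
  algebraMap_mem' := fun r σ => AlgHom.commutes _ r

/-- The degree-`d` graded piece of `OS_n`: the image in `OS_n` of the degree-`d` component of
the exterior algebra. -/
def OSdeg (n : ℕ) (d : ℕ) : Submodule ℚ (OS n) :=
  Submodule.map (RingQuot.mkAlgHom ℚ (OSRel n)).toLinearMap
    ((LinearMap.range (ExteriorAlgebra.ι ℚ : (OSidx n →₀ ℚ) →ₗ[ℚ] OSamb n)) ^ d)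

/-- The degree-`d` graded piece of the invariant subalgebra `OS_n^{S_n}`. -/
def OSinvDeg (n : ℕ) (d : ℕ) : Submodule ℚ (OS n) :=
  Subalgebra.toSubmodule (OSinv n) ⊓ OSdeg n d


namespace OSaux

set_option linter.all false

variable {n : ℕ}

/-- The defining property of a system of elements allowing a map out of the algebra. -/
lemma exists_lift {C : Type} [Ring C] [Algebra ℚ C] (g : Fin (n+1) → Fin (n+1) → C)
    (gdiag : ∀ i, g i i = 0)
    (gsymm : ∀ i j, g i j = g j i)
    (ganti : ∀ i j k l, g i j * g k l + g k l * g i j = 0)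
    (garn : ∀ i j k, i ≠ j → j ≠ k → i ≠ k →
      g i k * g j k - g i j * g j k + g i j * g i k = 0) :
    ∃ φ : OS n →ₐ[ℚ] C, ∀ i j, φ (eOS n i j) = g i j := by
  let G : OSidx n → C := fun s => Sym2.lift ⟨g, gsymm⟩ s.1
  let F : (OSidx n →₀ ℚ) →ₗ[ℚ] C := Finsupp.linearCombination ℚ G
  have hG : ∀ s t, G s * G t + G t * G s = 0 := by
    rintro ⟨s, hs⟩ ⟨t, ht⟩
    induction s using Sym2.ind with | _ a b =>
    induction t using Sym2.ind with | _ c d =>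
    exact ganti a b c d
  have hF : ∀ x y, F x * F y + F y * F x = 0 := by
    intro x y
    induction x using Finsupp.induction_linear with
    | zero => simp
    | add x1 x2 h1 h2 =>
      rw [map_add, add_mul, mul_add]
      calc _ = (F x1 * F y + F y * F x1) + (F x2 * F y + F y * F x2) := by abel
        _ = 0 := by rw [h1, h2, add_zero]
    | single s r =>
      induction y using Finsupp.induction_linear with
      | zero => simp
      | add x1 x2 h1 h2 =>
        rw [map_add, add_mul, mul_add]
        calc _ = (F (Finsupp.single s r) * F x1 + F x1 * F (Finsupp.single s r))
            + (F (Finsupp.single s r) * F x2 + F x2 * F (Finsupp.single s r)) := by abel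
          _ = 0 := by rw [h1, h2, add_zero]
      | single t q =>
        simp only [F, Finsupp.linearCombination_single, smul_mul_smul_comm]
        rw [mul_comm q r, ← smul_add, hG, smul_zero]
  have hF2 : ∀ x, F x * F x = 0 := by
    intro x
    have h := hF x x
    have h2 : (2 : ℚ) • (F x * F x) = 0 := by rw [two_smul]; exact h
    simpa using h2
  let ψ : OSamb n →ₐ[ℚ] C := ExteriorAlgebra.lift ℚ ⟨F, hF2⟩
  have hψ : ∀ i j h, ψ (eAmb n i j h) = g i j := by
    intro i j h
    simp only [ψ, eAmb, ExteriorAlgebra.lift_ι_apply, F, Finsupp.linearCombination_single, G,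
      one_smul]
    rfl
  have hrel : ∀ ⦃x y⦄, OSRel n x y → ψ x = ψ y := by
    intro x y h
    cases h with
    | rel i j k hij hjk hik =>
      simp only [map_sub, map_add, map_mul, map_zero, hψ]
      exact garn i j k hij hjk hik
  refine ⟨RingQuot.liftAlgHom ℚ ⟨ψ, hrel⟩, ?_⟩
  intro i j
  unfold eOS
  split_ifs with h
  · subst h; rw [map_zero, gdiag]
  · rw [RingQuot.liftAlgHom_mkAlgHom_apply]; exact hψ i j h

lemma e_diag (i : Fin (n+1)) : eOS n i i = 0 := by simp [eOS]

lemma e_of_ne {i j : Fin (n+1)} (h : i ≠ j) :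
    eOS n i j = RingQuot.mkAlgHom ℚ (OSRel n) (eAmb n i j h) := by simp [eOS, h]

lemma e_symm (i j : Fin (n+1)) : eOS n i j = eOS n j i := by
  by_cases h : i = j
  · subst h; rfl
  · rw [e_of_ne h, e_of_ne (Ne.symm h)]
    congr 1
    unfold eAmb
    congr 3
    exact Sym2.eq_swap

lemma e_anti (i j k l : Fin (n+1)) : eOS n i j * eOS n k l + eOS n k l * eOS n i j = 0 := by
  by_cases h : i = j
  · subst h; simp [e_diag]
  by_cases h' : k = l
  · subst h'; simp [e_diag]
  rw [e_of_ne h, e_of_ne h', ← map_mul, ← map_mul, ← map_add]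
  unfold eAmb
  rw [ExteriorAlgebra.ι_add_mul_swap, map_zero]

lemma e_sq (i j : Fin (n+1)) : eOS n i j * eOS n i j = 0 := by
  have h := e_anti (n := n) i j i j
  have h2 : (2 : ℚ) • (eOS n i j * eOS n i j) = 0 := by rw [two_smul]; exact h
  simpa using h2

lemma e_arn (i j k : Fin (n+1)) :
    eOS n i k * eOS n j k - eOS n i j * eOS n j k + eOS n i j * eOS n i k = 0 := by
  by_cases hij : i = j
  · subst hij; simp [e_diag, e_sq]
  by_cases hjk : j = k
  · subst hjk; simp [e_diag, e_sq]
  by_cases hik : i = k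
  · subst hik; simp [e_diag, e_symm j i, e_sq]
  rw [e_of_ne hij, e_of_ne hjk, e_of_ne hik]
  simpa using RingQuot.mkAlgHom_rel ℚ (OSRel.rel i j k hij hjk hik)

/-- The set of generators. -/
lemma adjoin_top : Algebra.adjoin ℚ {x : OS n | ∃ i j, x = eOS n i j} = ⊤ := by
  rw [eq_top_iff]
  rintro x -
  obtain ⟨y, rfl⟩ := RingQuot.mkAlgHom_surjective ℚ (OSRel n) x
  induction y using ExteriorAlgebra.induction with
  | algebraMap r => rw [AlgHom.commutes]; exact Subalgebra.algebraMap_mem _ r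
  | mul a b ha hb => rw [map_mul]; exact Subalgebra.mul_mem _ ha hb
  | add a b ha hb => rw [map_add]; exact Subalgebra.add_mem _ ha hb
  | ι v =>
    induction v using Finsupp.induction_linear with
    | zero => simp
    | add x1 x2 h1 h2 => rw [map_add, map_add]; exact Subalgebra.add_mem _ h1 h2
    | single s r =>
      obtain ⟨s, hs⟩ := s
      induction s using Sym2.ind with | _ a b =>
      have hab : a ≠ b := fun h => hs (Sym2.mk_isDiag_iff.mpr h)
      have : (Finsupp.single (⟨s(a,b), hs⟩ : OSidx n) r) = r • Finsupp.single ⟨s(a,b), hs⟩ 1 := by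
        simp
      rw [this, map_smul, map_smul]
      refine Subalgebra.smul_mem _ (Algebra.subset_adjoin (show _ ∈ {x : OS n | ∃ i j, x = eOS n i j} from ⟨a, b, ?_⟩)) r
      rw [e_of_ne hab]; rfl

lemma os_induction {P : OS n → Prop} (hs : ∀ r : ℚ, P (algebraMap ℚ _ r))
    (hg : ∀ i j, P (eOS n i j)) (ha : ∀ x y, P x → P y → P (x + y))
    (hm : ∀ x y, P x → P y → P (x * y)) (z : OS n) : P z := by
  have hz : z ∈ Algebra.adjoin ℚ {x : OS n | ∃ i j, x = eOS n i j} := by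
    rw [adjoin_top]; trivial
  induction hz using Algebra.adjoin_induction with
  | mem x hx => obtain ⟨i, j, rfl⟩ := hx; exact hg i j
  | algebraMap r => exact hs r
  | add x y _ _ hx hy => exact ha x y hx hy
  | mul x y _ _ hx hy => exact hm x y hx hy

lemma hom_ext {C : Type} [Ring C] [Algebra ℚ C] {φ ψ : OS n →ₐ[ℚ] C}
    (h : ∀ i j, φ (eOS n i j) = ψ (eOS n i j)) : φ = ψ := by
  refine AlgHom.ext fun z => ?_
  induction z using os_induction with
  | hs r => simp
  | hg i j => exact h i j
  | ha x y hx hy => simp [hx, hy]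
  | hm x y hx hy => simp [hx, hy]

/-- uniqueness of twisted derivations -/
lemma der_ext {f g : OS n → OS n} {D D' : OS n →ₗ[ℚ] OS n} (h1 : D 1 = D' 1)
    (hD : ∀ x y, D (x * y) = f x * D y + D x * g y)
    (hD' : ∀ x y, D' (x * y) = f x * D' y + D' x * g y)
    (h : ∀ i j, D (eOS n i j) = D' (eOS n i j)) (z : OS n) : D z = D' z := by
  induction z using os_induction with
  | hs r => rw [Algebra.algebraMap_eq_smul_one, map_smul, map_smul, h1]
  | hg i j => exact h i j
  | ha x y hx hy => simp [hx, hy]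
  | hm x y hx hy => rw [hD, hD', hx, hy]

/-- functoriality -/
lemma exists_map (f : Fin (n+1) → Fin (n+1)) :
    ∃ φ : OS n →ₐ[ℚ] OS n, ∀ i j, φ (eOS n i j) = eOS n (f i) (f j) :=
  exists_lift (fun i j => eOS n (f i) (f j)) (fun i => e_diag _) (fun i j => e_symm _ _)
    (fun i j k l => e_anti _ _ _ _) (fun i j k _ _ _ => e_arn _ _ _)

def omap (f : Fin (n+1) → Fin (n+1)) : OS n →ₐ[ℚ] OS n := (exists_map f).choose

@[simp] lemma omap_e (f : Fin (n+1) → Fin (n+1)) (i j) :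
    omap f (eOS n i j) = eOS n (f i) (f j) := (exists_map f).choose_spec i j

lemma omap_omap (f g : Fin (n+1) → Fin (n+1)) (z : OS n) :
    omap f (omap g z) = omap (f ∘ g) z := by
  have : (omap f).comp (omap g) = omap (f ∘ g) := hom_ext (fun i j => by simp)
  exact DFunLike.congr_fun this z

lemma perm_eq (σ : Equiv.Perm (Fin (n+1))) : OSperm n σ = omap σ := by
  apply hom_ext
  intro i j
  rw [omap_e]
  by_cases h : i = j
  · subst h; simp [e_diag]
  · rw [e_of_ne h, e_of_ne (fun hh => h (σ.injective hh)), OSperm,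
      RingQuot.liftAlgHom_mkAlgHom_apply, AlgHom.comp_apply, OSpermAmb_e]

lemma exists_alpha :
    ∃ φ : OS n →ₐ[ℚ] OS n, ∀ i j, φ (eOS n i j) = - eOS n i j :=
  exists_lift (fun i j => - eOS n i j) (fun i => by simp [e_diag])
    (fun i j => by rw [e_symm])
    (fun i j k l => by simpa using e_anti _ _ _ _)
    (fun i j k _ _ _ => by simpa using e_arn _ _ _)

/-- The parity automorphism. -/
def al : OS n →ₐ[ℚ] OS n := (exists_alpha).choose

@[simp] lemma al_e (i j) : al (eOS n i j) = - eOS n i j := (exists_alpha).choose_spec i j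

@[simp] lemma al_al (z : OS n) : al (al z) = z := by
  have : (al).comp al = AlgHom.id ℚ (OS n) := hom_ext (fun i j => by simp)
  exact DFunLike.congr_fun this z

lemma al_omap (f : Fin (n+1) → Fin (n+1)) (z : OS n) : al (omap f z) = omap f (al z) := by
  have : (al).comp (omap f) = (omap f).comp al := hom_ext (fun i j => by simp)
  exact DFunLike.congr_fun this z

/-- merging `v` into `u` -/
def mrg (u v : Fin (n+1)) : Fin (n+1) → Fin (n+1) := fun x => if x = v then u else x

/-- indicator of the pair -/
def ind (u v i j : Fin (n+1)) : ℚ := if (i = u ∧ j = v) ∨ (i = v ∧ j = u) then 1 else 0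

lemma exists_rho (u v : Fin (n+1)) (huv : u ≠ v) :
    ∃ φ : OS n →ₐ[ℚ] Matrix (Fin 2) (Fin 2) (OS n), ∀ i j, φ (eOS n i j) =
      !![eOS n (mrg u v i) (mrg u v j), algebraMap ℚ _ (ind u v i j);
        0, - eOS n (mrg u v i) (mrg u v j)] := by
  refine exists_lift (fun i j => !![eOS n (mrg u v i) (mrg u v j), algebraMap ℚ _ (ind u v i j);
        0, - eOS n (mrg u v i) (mrg u v j)]) ?_ ?_ ?_ ?_
  · intro i
    have : ind u v i i = 0 := by
      unfold ind; rw [if_neg]; rintro (⟨h1, h2⟩ | ⟨h1, h2⟩) <;> exact huv (by rw [← h1, ← h2])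
    rw [this]
    ext a b; fin_cases a <;> fin_cases b <;> simp [e_diag]
  · intro i j
    have : ind u v i j = ind u v j i := by unfold ind; congr 1; apply propext; tauto
    rw [e_symm, this]
  · intro i j k l
    have h := e_anti (mrg u v i) (mrg u v j) (mrg u v k) (mrg u v l)
    ext a b; fin_cases a <;> fin_cases b <;>
      simp [Matrix.mul_apply, Fin.sum_univ_two, h]
    rw [← Algebra.commutes (ind u v k l), ← Algebra.commutes (ind u v i j),
      ← Algebra.smul_def, ← Algebra.smul_def]
    abel
  · intro i j k hij hjk hik
    have h := e_arn (mrg u v i) (mrg u v j) (mrg u v k)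
    have key : ∀ x y w, ind u v x y • (eOS n (mrg u v x) w - eOS n (mrg u v y) w) = 0 := by
      intro x y w
      unfold ind
      split_ifs with hxy
      · have : mrg u v x = mrg u v y := by
          rcases hxy with ⟨rfl, rfl⟩ | ⟨rfl, rfl⟩ <;> simp [mrg]
        rw [this]; simp
      · simp
    have k1 := key j k (mrg u v i)
    have k2 := key i k (mrg u v j)
    have k3 := key i j (mrg u v k)
    rw [e_symm (mrg u v j) (mrg u v i), e_symm (mrg u v k) (mrg u v i)] at k1
    rw [e_symm (mrg u v k) (mrg u v j)] at k2
    rw [smul_sub] at k1 k2 k3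
    ext a b; fin_cases a <;> fin_cases b <;>
      simp [Matrix.mul_apply, Fin.sum_univ_two, h]
    simp only [← Algebra.commutes (ind u v j k), ← Algebra.commutes (ind u v i k),
      ← Algebra.smul_def]
    rw [sub_eq_zero] at k1 k2 k3
    rw [k1, k2, k3]
    abel

end OSaux

namespace OSaux
set_option linter.all false

variable {n : ℕ}

lemma exists_res (u v : Fin (n+1)) : ∃ D : OS n →ₗ[ℚ] OS n, u ≠ v →
    D 1 = 0 ∧
    (∀ x y, D (x * y) = omap (mrg u v) x * D y + D x * al (omap (mrg u v) y)) ∧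
    ∀ i j, D (eOS n i j) = algebraMap ℚ _ (ind u v i j) := by
  by_cases huv : u = v
  · exact ⟨0, fun h => absurd huv h⟩
  obtain ⟨φ, hφ⟩ := exists_rho u v huv
  have key : ∀ z, φ z 0 0 = omap (mrg u v) z ∧ φ z 1 0 = 0 ∧
      φ z 1 1 = al (omap (mrg u v) z) := by
    intro z
    induction z using os_induction with
    | hs r => simp [AlgHom.commutes, Matrix.algebraMap_matrix_apply]
    | hg i j => rw [hφ]; simp
    | ha x y hx hy => simp [hx, hy]
    | hm x y hx hy => simp [hx, hy, Matrix.mul_apply, Fin.sum_univ_two]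
  refine ⟨{ toFun := fun z => φ z 0 1, map_add' := by simp, map_smul' := by simp },
    fun _ => ⟨?_, ?_, ?_⟩⟩
  · simp
  · intro x y
    simp [Matrix.mul_apply, Fin.sum_univ_two, key]
  · intro i j
    simp [hφ]

/-- The residue map along `e u v`, merging `v` into `u`. -/
def res (u v : Fin (n+1)) : OS n →ₗ[ℚ] OS n := (exists_res u v).choose

lemma res_one {u v : Fin (n+1)} (h : u ≠ v) : res u v (1 : OS n) = 0 :=
  ((exists_res u v).choose_spec h).1

lemma res_mul {u v : Fin (n+1)} (h : u ≠ v) (x y : OS n) :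
    res u v (x * y) = omap (mrg u v) x * res u v y + res u v x * al (omap (mrg u v) y) :=
  ((exists_res u v).choose_spec h).2.1 x y

lemma res_e {u v : Fin (n+1)} (h : u ≠ v) (i j) :
    res u v (eOS n i j) = algebraMap ℚ _ (ind u v i j) :=
  ((exists_res u v).choose_spec h).2.2 i j

lemma res_alg {u v : Fin (n+1)} (h : u ≠ v) (r : ℚ) :
    res u v (algebraMap ℚ (OS n) r) = 0 := by
  rw [Algebra.algebraMap_eq_smul_one, map_smul, res_one h, smul_zero]

lemma ind_symm (u v i j : Fin (n+1)) : ind u v i j = ind v u i j := by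
  unfold ind; congr 1; apply propext; tauto

lemma ind_symm' (u v i j : Fin (n+1)) : ind u v i j = ind u v j i := by
  unfold ind; congr 1; apply propext; tauto

/-- residues anticommute with parity -/
lemma res_al {u v : Fin (n+1)} (h : u ≠ v) (z : OS n) : res u v (al z) = - al (res u v z) := by
  refine der_ext (D := (res u v) ∘ₗ al.toLinearMap) (D' := - (al.toLinearMap ∘ₗ res u v))
    (f := fun x => omap (mrg u v) (al x)) (g := fun y => (omap (mrg u v) y)) ?_ ?_ ?_ ?_ z
  · simp [res_one h]
  · intro x y; simp [res_mul h, al_omap]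
  · intro x y
    simp [res_mul h, al_omap]
    abel
  · intro i j; simp [res_e h]

/-- equivariance -/
lemma res_perm {u v : Fin (n+1)} (h : u ≠ v) (σ : Equiv.Perm (Fin (n+1))) (z : OS n) :
    omap σ (res u v z) = res (σ u) (σ v) (omap σ z) := by
  have h' : σ u ≠ σ v := fun hh => h (σ.injective hh)
  have hc : ∀ x : OS n, omap (mrg (σ u) (σ v)) (omap σ x) = omap σ (omap (mrg u v) x) := by
    intro x
    rw [omap_omap, omap_omap]
    congr 2
    funext i
    simp only [mrg, Function.comp, EmbeddingLike.apply_eq_iff_eq]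
    split_ifs <;> rfl
  refine der_ext (D := (omap σ).toLinearMap ∘ₗ res u v)
    (D' := res (σ u) (σ v) ∘ₗ (omap σ).toLinearMap)
    (f := fun x => omap σ (omap (mrg u v) x)) (g := fun x => al (omap σ (omap (mrg u v) x)))
    ?_ ?_ ?_ ?_ z
  · simp [res_one h, res_one h']
  · intro x y; simp [res_mul h, al_omap]
  · intro x y; simp [res_mul h', hc]
  · intro i j; simp [res_e h, res_e h', ind]

/-- merging something disjoint commutes with the residue -/
lemma res_comm_mrg {u v s t : Fin (n+1)} (h : u ≠ v) (h' : s ≠ t) (hus : u ≠ s) (hut : u ≠ t)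
    (hvs : v ≠ s) (hvt : v ≠ t) (z : OS n) :
    omap (mrg s t) (res u v z) = res u v (omap (mrg s t) z) := by
  have hc : ∀ x : OS n, omap (mrg u v) (omap (mrg s t) x) =
      omap (mrg s t) (omap (mrg u v) x) := by
    intro x
    rw [omap_omap, omap_omap]
    congr 2
    funext i
    simp only [mrg, Function.comp]
    split_ifs <;> simp_all
  refine der_ext (D := (omap (mrg s t)).toLinearMap ∘ₗ res u v)
    (D' := res u v ∘ₗ (omap (mrg s t)).toLinearMap)
    (f := fun x => omap (mrg s t) (omap (mrg u v) x))
    (g := fun x => al (omap (mrg s t) (omap (mrg u v) x)))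
    ?_ ?_ ?_ ?_ z
  · simp [res_one h]
  · intro x y; simp [res_mul h, al_omap]
  · intro x y; simp [res_mul h, hc]
  · intro i j
    simp [res_e h]
    congr 1
    simp only [ind, mrg]
    split_ifs <;> grind

lemma res_anticomm {u v s t : Fin (n+1)} (h : u ≠ v) (h' : s ≠ t) (hus : u ≠ s) (hut : u ≠ t)
    (hvs : v ≠ s) (hvt : v ≠ t) (z : OS n) :
    res u v (res s t z) = - res s t (res u v z) := by
  have hc : ∀ x : OS n, omap (mrg u v) (omap (mrg s t) x) =
      omap (mrg s t) (omap (mrg u v) x) := by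
    intro x
    rw [omap_omap, omap_omap]
    congr 2
    funext i
    simp only [mrg, Function.comp]
    split_ifs <;> simp_all
  have c1 := res_comm_mrg h h' hus hut hvs hvt
  have c2 := res_comm_mrg h' h hus.symm hvs.symm hut.symm hvt.symm
  have := der_ext (D := res u v ∘ₗ res s t + res s t ∘ₗ res u v) (D' := 0)
    (f := fun x => omap (mrg s t) (omap (mrg u v) x))
    (g := fun x => (omap (mrg s t) (omap (mrg u v) x)))
    ?_ ?_ ?_ ?_ z
  · simpa [add_eq_zero_iff_eq_neg] using this
  · simp [res_one h, res_one h']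
  · intro x y
    simp [res_mul h, res_mul h', hc, c1, c2, res_al h, res_al h', al_omap, mul_add, add_mul]
    simp only [← al_omap, ← c1, ← c2, al_al, res_al h, res_al h', hc]
    simp
    abel
  · intro x y; simp
  · intro i j; simp [res_e h, res_e h', res_alg h, res_alg h']

end OSaux

namespace OSaux
set_option linter.all false

variable {n : ℕ}

lemma omap_mrg {μ : Fin (n+1) → Fin (n+1)} {a b : Fin (n+1)} (h : μ a = μ b) (x : OS n) :
    omap μ (omap (mrg a b) x) = omap μ x := by
  rw [omap_omap]
  congr 2
  funext i
  simp only [mrg, Function.comp]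
  split_ifs with hi
  · rw [hi, h]
  · rfl

lemma omap_res_symm {μ : Fin (n+1) → Fin (n+1)} {a b : Fin (n+1)} (hab : a ≠ b) (h : μ a = μ b)
    (z : OS n) : omap μ (res a b z) = omap μ (res b a z) := by
  refine der_ext (D := (omap μ).toLinearMap ∘ₗ res a b) (D' := (omap μ).toLinearMap ∘ₗ res b a)
    (f := fun x => omap μ x) (g := fun x => al (omap μ x)) ?_ ?_ ?_ ?_ z
  · simp [res_one hab, res_one hab.symm]
  · intro x y; simp [res_mul hab, ← al_omap, omap_mrg h]
  · intro x y; simp [res_mul hab.symm, ← al_omap, omap_mrg h.symm]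
  · intro i j; simp [res_e hab, res_e hab.symm, ind_symm a b]

lemma omap_res_mrg {μ : Fin (n+1) → Fin (n+1)} {a b c : Fin (n+1)} (hab : a ≠ b) (hac : a ≠ c)
    (hbc : b ≠ c) (h : μ a = μ b) (h' : μ a = μ c) (z : OS n) :
    omap μ (res a c (omap (mrg a b) z)) = omap μ (res a c z) + omap μ (res b c z) := by
  refine der_ext (D := (omap μ).toLinearMap ∘ₗ res a c ∘ₗ (omap (mrg a b)).toLinearMap)
    (D' := (omap μ).toLinearMap ∘ₗ res a c + (omap μ).toLinearMap ∘ₗ res b c)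
    (f := fun x => omap μ x) (g := fun x => al (omap μ x)) ?_ ?_ ?_ ?_ z
  · simp [res_one hac, res_one hbc]
  · intro x y; simp [res_mul hac, ← al_omap, omap_mrg h, omap_mrg h']
  · intro x y
    simp [res_mul hac, res_mul hbc, ← al_omap, omap_mrg h', omap_mrg (h.symm.trans h')]
    noncomm_ring
  · intro i j
    simp [res_e hac, res_e hbc]
    rw [← map_add]
    congr 1
    simp only [ind, mrg]
    split_ifs <;> grind

lemma jacobi {μ : Fin (n+1) → Fin (n+1)} {a b c : Fin (n+1)} (hab : a ≠ b) (hac : a ≠ c)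
    (hbc : b ≠ c) (h : μ a = μ b) (h' : μ a = μ c) (z : OS n) :
    omap μ (res a c (res a b z)) + omap μ (res b a (res b c z)) +
      omap μ (res c b (res c a z)) = 0 := by
  have h'' := h.symm.trans h'
  have Z := fun z => omap_res_symm hac h' z
  have X := fun z => omap_res_symm hab h z
  have Y := fun z => omap_res_symm hbc h'' z
  have := der_ext (D := (omap μ).toLinearMap ∘ₗ res a c ∘ₗ res a b +
      (omap μ).toLinearMap ∘ₗ res b a ∘ₗ res b c + (omap μ).toLinearMap ∘ₗ res c b ∘ₗ res c a)
    (D' := 0)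
    (f := fun x => omap μ x) (g := fun x => omap μ x) ?_ ?_ ?_ ?_ z
  · simpa using this
  · simp [res_one hab, res_one hbc, res_one hac.symm]
  · intro x y
    simp [res_mul hab, res_mul hbc, res_mul hac.symm, res_mul hac, res_mul hab.symm,
      res_mul hbc.symm, ← al_omap, omap_mrg h', omap_mrg h, omap_mrg h'', omap_mrg h'.symm,
      omap_mrg h.symm, omap_mrg h''.symm, res_al hac, res_al hab.symm, res_al hbc.symm,
      omap_res_mrg hab hac hbc h h', omap_res_mrg hbc hab.symm hac.symm h'' h.symm,
      omap_res_mrg hac.symm hbc.symm hab h'.symm h''.symm]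
    simp only [Z, X, Y]
    noncomm_ring
  · intro x y; simp
  · intro i j
    simp [res_e hab, res_e hbc, res_e hac.symm, res_alg hac, res_alg hab.symm, res_alg hbc.symm]

/-- The subalgebra generated by the `e i j` with `i, j ∈ S`. -/
def AS (S : Finset (Fin (n+1))) : Subalgebra ℚ (OS n) :=
  Algebra.adjoin ℚ {x | ∃ i ∈ S, ∃ j ∈ S, x = eOS n i j}

lemma e_mem {S : Finset (Fin (n+1))} {i j} (hi : i ∈ S) (hj : j ∈ S) : eOS n i j ∈ AS S :=
  Algebra.subset_adjoin ⟨i, hi, j, hj, rfl⟩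

lemma AS_mono {S T : Finset (Fin (n+1))} (h : S ⊆ T) : AS S ≤ AS T :=
  Algebra.adjoin_mono (by rintro x ⟨i, hi, j, hj, rfl⟩; exact ⟨i, h hi, j, h hj, rfl⟩)

lemma AS_induction {S : Finset (Fin (n+1))} {P : (z : OS n) → z ∈ AS S → Prop}
    (hs : ∀ r : ℚ, P (algebraMap ℚ _ r) (Subalgebra.algebraMap_mem _ r))
    (hg : ∀ i (hi : i ∈ S), ∀ j (hj : j ∈ S), P (eOS n i j) (e_mem hi hj))
    (ha : ∀ x y hx hy, P x hx → P y hy → P (x + y) (add_mem hx hy))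
    (hm : ∀ x (hx : x ∈ AS S), ∀ y (hy : y ∈ AS S), P x hx → P y hy → P (x * y) (mul_mem hx hy))
    {z : OS n} (hz : z ∈ AS S) : P z hz := by
  induction hz using Algebra.adjoin_induction with
  | mem x hx => obtain ⟨i, hi, j, hj, rfl⟩ := hx; exact hg i hi j hj
  | algebraMap r => exact hs r
  | add x y h1 h2 hx hy => exact ha x y h1 h2 hx hy
  | mul x y h1 h2 hx hy => exact hm x h1 y h2 hx hy

lemma omap_mem {S T : Finset (Fin (n+1))} {f : Fin (n+1) → Fin (n+1)} (h : ∀ i ∈ S, f i ∈ T)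
    {z : OS n} (hz : z ∈ AS S) : omap f z ∈ AS T := by
  induction hz using AS_induction with
  | hs r => rw [AlgHom.commutes]; exact Subalgebra.algebraMap_mem _ r
  | hg i hi j hj => rw [omap_e]; exact e_mem (h i hi) (h j hj)
  | ha x y _ _ hx hy => rw [map_add]; exact add_mem hx hy
  | hm x _ y _ hx hy => rw [map_mul]; exact mul_mem hx hy

lemma al_mem {S : Finset (Fin (n+1))} {z : OS n} (hz : z ∈ AS S) : al z ∈ AS S := by
  induction hz using AS_induction with
  | hs r => rw [AlgHom.commutes]; exact Subalgebra.algebraMap_mem _ r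
  | hg i hi j hj => rw [al_e]; exact neg_mem (e_mem hi hj)
  | ha x y _ _ hx hy => rw [map_add]; exact add_mem hx hy
  | hm x _ y _ hx hy => rw [map_mul]; exact mul_mem hx hy

lemma omap_fix {S : Finset (Fin (n+1))} {f : Fin (n+1) → Fin (n+1)} (h : ∀ i ∈ S, f i = i)
    {z : OS n} (hz : z ∈ AS S) : omap f z = z := by
  induction hz using AS_induction with
  | hs r => rw [AlgHom.commutes]
  | hg i hi j hj => rw [omap_e, h i hi, h j hj]
  | ha x y _ _ hx hy => rw [map_add, hx, hy]
  | hm x _ y _ hx hy => rw [map_mul, hx, hy]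

lemma res_zero {S : Finset (Fin (n+1))} {u v : Fin (n+1)} (huv : u ≠ v) (hv : v ∉ S)
    {z : OS n} (hz : z ∈ AS S) : res u v z = 0 := by
  induction hz using AS_induction with
  | hs r => exact res_alg huv r
  | hg i hi j hj =>
    rw [res_e huv, ind, if_neg, map_zero]
    rintro (⟨rfl, rfl⟩ | ⟨rfl, rfl⟩) <;> contradiction
  | ha x y _ _ hx hy => rw [map_add, hx, hy, add_zero]
  | hm x _ y _ hx hy => rw [res_mul huv, hx, hy]; simp

lemma res_mem {S T : Finset (Fin (n+1))} {u v : Fin (n+1)} (huv : u ≠ v)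
    (h : ∀ i ∈ S, mrg u v i ∈ T) {z : OS n} (hz : z ∈ AS S) : res u v z ∈ AS T := by
  induction hz using AS_induction with
  | hs r => rw [res_alg huv]; exact zero_mem _
  | hg i hi j hj => rw [res_e huv]; exact Subalgebra.algebraMap_mem _ _
  | ha x y _ _ hx hy => rw [map_add]; exact add_mem hx hy
  | hm x h1 y h2 hx hy =>
    rw [res_mul huv]
    exact add_mem (mul_mem (omap_mem h h1) hy) (mul_mem hx (al_mem (omap_mem h h2)))

/-- `OS` on `insert v S` as a module over `OS` on `S`. -/
lemma span_decomp {S : Finset (Fin (n+1))} {v : Fin (n+1)} {z : OS n} (hz : z ∈ AS (insert v S)) :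
    z ∈ Submodule.span ℚ ({x : OS n | x ∈ AS S} ∪ {x | ∃ a ∈ AS S, ∃ i ∈ S, x = a * eOS n i v}) := by
  set M := Submodule.span ℚ ({x : OS n | x ∈ AS S} ∪ {x | ∃ a ∈ AS S, ∃ i ∈ S, x = a * eOS n i v})
    with hM
  have h1 : ∀ x ∈ AS S, x ∈ M := fun x hx => Submodule.subset_span (Or.inl hx)
  have h2 : ∀ a ∈ AS S, ∀ i ∈ S, a * eOS n i v ∈ M :=
    fun a ha i hi => Submodule.subset_span (Or.inr ⟨a, ha, i, hi, rfl⟩)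
  have g1 : ∀ m ∈ M, ∀ i ∈ S, ∀ j ∈ S, m * eOS n i j ∈ M := by
    intro m hm i hi j hj
    induction hm using Submodule.span_induction with
    | mem x hx =>
      rcases hx with hx | ⟨a, ha, k, hk, rfl⟩
      · exact h1 _ (mul_mem hx (e_mem hi hj))
      · have : a * eOS n k v * eOS n i j = - (a * eOS n i j * eOS n k v) := by
          rw [mul_assoc, mul_assoc, eq_neg_of_add_eq_zero_left (e_anti k v i j), mul_neg]
        rw [this]
        exact neg_mem (h2 _ (mul_mem ha (e_mem hi hj)) k hk)
    | zero => simp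
    | add x y _ _ hx hy => rw [add_mul]; exact add_mem hx hy
    | smul r x _ hx => rw [smul_mul_assoc]; exact Submodule.smul_mem _ _ hx
  have g2 : ∀ m ∈ M, ∀ i ∈ S, m * eOS n i v ∈ M := by
    intro m hm i hi
    induction hm using Submodule.span_induction with
    | mem x hx =>
      rcases hx with hx | ⟨a, ha, k, hk, rfl⟩
      · exact h2 _ hx i hi
      · have : a * eOS n k v * eOS n i v =
            a * eOS n k i * eOS n i v - a * eOS n k i * eOS n k v := by
          have := e_arn k i v
          rw [mul_assoc, mul_assoc, mul_assoc, ← mul_sub]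
          congr 1
          rw [← sub_eq_zero, ← this]; abel
        rw [this]
        exact sub_mem (h2 _ (mul_mem ha (e_mem hk hi)) i hi) (h2 _ (mul_mem ha (e_mem hk hi)) k hk)
    | zero => simp
    | add x y _ _ hx hy => rw [add_mul]; exact add_mem hx hy
    | smul r x _ hx => rw [smul_mul_assoc]; exact Submodule.smul_mem _ _ hx
  have g : ∀ m ∈ M, m * z ∈ M := by
    induction hz using AS_induction with
    | hs r =>
      intro m hm
      rw [← Algebra.commutes, ← Algebra.smul_def]; exact Submodule.smul_mem _ _ hm
    | hg i hi j hj =>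
      intro m hm
      rcases Finset.mem_insert.mp hi with hi' | hi'
      · rcases Finset.mem_insert.mp hj with hj' | hj'
        · rw [hi', hj', e_diag]; simp
        · rw [hi', e_symm]; exact g2 m hm j hj'
      · rcases Finset.mem_insert.mp hj with hj' | hj'
        · rw [hj']; exact g2 m hm i hi'
        · exact g1 m hm i hi' j hj'
    | ha x y _ _ hx hy => intro m hm; rw [mul_add]; exact add_mem (hx m hm) (hy m hm)
    | hm x _ y _ hx hy => intro m hm; rw [← mul_assoc]; exact hy _ (hx m hm)
  simpa using g 1 (h1 1 (one_mem _))

lemma decomp {S : Finset (Fin (n+1))} {v : Fin (n+1)} (hv : v ∉ S) {z : OS n}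
    (hz : z ∈ AS (insert v S)) : z - ∑ i ∈ S, res i v z * eOS n i v ∈ AS S := by
  have := span_decomp hz
  clear hz
  have hne : ∀ i ∈ S, i ≠ v := fun i hi h => hv (h ▸ hi)
  induction this using Submodule.span_induction with
  | mem x hx =>
    rcases hx with hx | ⟨a, ha, k, hk, rfl⟩
    · have : ∑ i ∈ S, res i v x * eOS n i v = 0 :=
        Finset.sum_eq_zero fun i hi => by rw [res_zero (hne i hi) hv hx, zero_mul]
      rw [this, sub_zero]; exact hx
    · have : ∑ i ∈ S, res i v (a * eOS n k v) * eOS n i v = a * eOS n k v := by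
        rw [Finset.sum_eq_single_of_mem k hk]
        · rw [res_mul (hne k hk), res_zero (hne k hk) hv ha, res_e (hne k hk), omap_fix _ ha]
          · simp [ind]
          · intro i hi; simp [mrg, hne i hi]
        · intro i hi hik
          rw [res_mul (hne i hi), res_zero (hne i hi) hv ha, res_e (hne i hi)]
          have : ind i v k v = 0 := by
            unfold ind; rw [if_neg]; have := hne i hi; have := hne k hk; tauto
          simp [this]
      rw [this, sub_self]; exact zero_mem _
  | zero => simp
  | add x y _ _ hx hy =>
    simp only [map_add, add_mul, Finset.sum_add_distrib]
    have := add_mem hx hy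
    convert this using 1
    abel
  | smul r x _ hx =>
    simp only [map_smul, smul_mul_assoc, ← Finset.smul_sum, ← smul_sub]
    exact Subalgebra.smul_mem _ hx r

lemma detect {S : Finset (Fin (n+1))} {v : Fin (n+1)} (hv : v ∉ S) {z : OS n}
    (hz : z ∈ AS (insert v S)) (h : ∀ i ∈ S, res i v z = 0) : z ∈ AS S := by
  have := decomp hv hz
  rwa [Finset.sum_eq_zero (fun i hi => by rw [h i hi, zero_mul]), sub_zero] at this

lemma AS_empty {z : OS n} (hz : z ∈ AS ∅) : ∃ r, z = algebraMap ℚ _ r := by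
  have : AS (n := n) ∅ = ⊥ := by simp [AS]
  rw [this] at hz
  obtain ⟨r, hr⟩ := Algebra.mem_bot.mp hz
  exact ⟨r, hr.symm⟩

lemma scalar_of_res {S : Finset (Fin (n+1))} {z : OS n} (hz : z ∈ AS S)
    (h : ∀ i ∈ S, ∀ j ∈ S, i ≠ j → res i j z = 0) : ∃ r, z = algebraMap ℚ _ r := by
  induction S using Finset.induction_on with
  | empty => exact AS_empty hz
  | insert v S hv ih =>
    refine ih (detect hv hz ?_) ?_
    · exact fun i hi => h i (Finset.mem_insert_of_mem hi) v (Finset.mem_insert_self _ _)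
        (fun hh => hv (hh ▸ hi))
    · exact fun i hi j hj => h i (Finset.mem_insert_of_mem hi) j (Finset.mem_insert_of_mem hj)

end OSaux

namespace OSaux
set_option linter.all false

variable {n : ℕ}

/-- invariants of `AS T` under the permutations supported on `S` -/
def Inv (T S : Finset (Fin (n+1))) : Submodule ℚ (OS n) where
  carrier := {z | z ∈ AS T ∧ ∀ σ : Equiv.Perm (Fin (n+1)), (∀ i, i ∉ S → σ i = i) → omap σ z = z}
  add_mem' := fun hx hy => ⟨add_mem hx.1 hy.1, fun σ h => by
    rw [map_add, hx.2 σ h, hy.2 σ h]⟩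
  zero_mem' := ⟨zero_mem _, fun σ h => map_zero _⟩
  smul_mem' := fun r x hx => ⟨Subalgebra.smul_mem _ hx.1 r, fun σ h => by
    rw [map_smul, hx.2 σ h]⟩

lemma mem_Inv {T S : Finset (Fin (n+1))} {z : OS n} : z ∈ Inv T S ↔
    z ∈ AS T ∧ ∀ σ : Equiv.Perm (Fin (n+1)), (∀ i, i ∉ S → σ i = i) → omap σ z = z := Iff.rfl

lemma Inv_mul {T S : Finset (Fin (n+1))} {x y : OS n} (hx : x ∈ Inv T S) (hy : y ∈ Inv T S) :
    x * y ∈ Inv T S :=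
  ⟨mul_mem hx.1 hy.1, fun σ h => by rw [map_mul, hx.2 σ h, hy.2 σ h]⟩

lemma Inv_one {T S : Finset (Fin (n+1))} : (1 : OS n) ∈ Inv T S :=
  ⟨one_mem _, fun σ h => map_one _⟩

lemma Inv_pow {T S : Finset (Fin (n+1))} {x : OS n} (hx : x ∈ Inv T S) (d : ℕ) :
    x ^ d ∈ Inv T S := by
  induction d with
  | zero => rw [pow_zero]; exact Inv_one
  | succ d ih => rw [pow_succ]; exact Inv_mul ih hx

def aS (S : Finset (Fin (n+1))) : OS n := (1/2 : ℚ) • ∑ i ∈ S, ∑ j ∈ S, eOS n i j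
def mS (S : Finset (Fin (n+1))) (r : Fin (n+1)) : OS n := ∑ i ∈ S, eOS n i r
def cS (S : Finset (Fin (n+1))) (r : Fin (n+1)) : OS n :=
  ∑ i ∈ S, ∑ j ∈ S, eOS n i j * eOS n i r

lemma perm_mem {S : Finset (Fin (n+1))} {σ : Equiv.Perm (Fin (n+1))}
    (h : ∀ i, i ∉ S → σ i = i) (i : Fin (n+1)) : i ∈ S ↔ σ i ∈ S := by
  constructor
  · intro hi
    by_contra hc
    have := h _ hc
    exact hc (by rwa [σ.injective this])
  · intro hi
    by_contra hc
    rw [h _ hc] at hi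
    exact hc hi

lemma perm_sum {S : Finset (Fin (n+1))} {σ : Equiv.Perm (Fin (n+1))}
    (h : ∀ i, i ∉ S → σ i = i) (f : Fin (n+1) → OS n) : ∑ i ∈ S, f (σ i) = ∑ i ∈ S, f i :=
  Finset.sum_equiv σ (perm_mem h) (fun i _ => rfl)

lemma aS_mem {S T : Finset (Fin (n+1))} (hST : S ⊆ T) : aS S ∈ Inv T S := by
  constructor
  · exact Subalgebra.smul_mem _ (sum_mem fun i hi => sum_mem fun j hj => e_mem (hST hi) (hST hj)) _
  · intro σ h
    simp only [aS, map_smul, map_sum, omap_e]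
    rw [perm_sum h (fun x => ∑ j ∈ S, eOS n x (σ j))]
    congr 1
    exact Finset.sum_congr rfl fun i _ => perm_sum h (fun x => eOS n i x)

lemma mS_mem {S : Finset (Fin (n+1))} {r : Fin (n+1)} (hr : r ∉ S) :
    mS S r ∈ Inv (insert r S) S := by
  constructor
  · exact sum_mem fun i hi => e_mem (Finset.mem_insert_of_mem hi) (Finset.mem_insert_self _ _)
  · intro σ h
    simp only [mS, map_sum, omap_e, h r hr]
    exact perm_sum h (fun x => eOS n x r)

lemma cS_mem {S : Finset (Fin (n+1))} {r : Fin (n+1)} (hr : r ∉ S) :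
    cS S r ∈ Inv (insert r S) S := by
  constructor
  · exact sum_mem fun i hi => sum_mem fun j hj =>
      mul_mem (e_mem (Finset.mem_insert_of_mem hi) (Finset.mem_insert_of_mem hj))
        (e_mem (Finset.mem_insert_of_mem hi) (Finset.mem_insert_self _ _))
  · intro σ h
    simp only [cS, map_sum, map_mul, omap_e, h r hr]
    rw [perm_sum h (fun x => ∑ j ∈ S, eOS n x (σ j) * eOS n x r)]
    exact Finset.sum_congr rfl fun i _ => perm_sum h (fun x => eOS n i x * eOS n i r)

lemma res_aS {S : Finset (Fin (n+1))} {u v : Fin (n+1)} (hu : u ∈ S) (hv : v ∈ S) (huv : u ≠ v) :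
    res u v (aS S) = 1 := by
  simp only [aS, map_smul, map_sum, res_e huv]
  have : ∑ i ∈ S, ∑ j ∈ S, ind u v i j = 2 := by
    have : ∀ i j, ind u v i j = (if i = u then (if j = v then 1 else 0) else 0) +
        (if i = v then (if j = u then 1 else 0) else 0) := by
      intro i j; unfold ind; split_ifs <;> grind
    simp only [this, Finset.sum_add_distrib]
    have h1 : ∀ a b, a ∈ S → b ∈ S →
        ∑ i ∈ S, ∑ j ∈ S, (if i = a then (if j = b then (1:ℚ) else 0) else 0) = 1 := by
      intro a b ha hb
      rw [Finset.sum_eq_single_of_mem a ha, Finset.sum_eq_single_of_mem b hb]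
      · simp
      · intro j _ hj; simp [hj]
      · intro j _ hj; simp [hj]
    rw [h1 u v hu hv, h1 v u hv hu]; norm_num
  simp only [← map_sum, this]
  rw [Algebra.smul_def, ← map_mul]; norm_num

lemma swap_fix {S : Finset (Fin (n+1))} {a b : Fin (n+1)} (ha : a ∉ S) (hb : b ∉ S)
    {z : OS n} (hz : z ∈ AS S) : omap (Equiv.swap a b) z = z :=
  omap_fix (fun i hi => by
    have h1 : i ≠ a := by rintro rfl; exact ha hi
    have h2 : i ≠ b := by rintro rfl; exact hb hi
    exact Equiv.swap_apply_of_ne_of_ne h1 h2) hz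

lemma omap_mul (σ τ : Equiv.Perm (Fin (n+1))) (z : OS n) :
    omap (σ * τ : Equiv.Perm (Fin (n+1))) z = omap σ (omap τ z) := by
  rw [omap_omap]; rfl

lemma step1 {S : Finset (Fin (n+1))} {z : OS n} (hz : z ∈ Inv S S) {u v k : Fin (n+1)}
    (hu : u ∈ S) (hv : v ∈ S) (hk : k ∈ S) (huv : u ≠ v) (huk : u ≠ k) (hvk : v ≠ k) :
    res u k (res u v z) = 0 := by
  set w := res u k (res u v z) with hw
  let μ : Fin (n+1) → Fin (n+1) := fun x => if x = v ∨ x = k then u else x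
  have hμ1 : μ u = μ v := by simp [μ, huv, huk]
  have hμ2 : μ u = μ k := by simp [μ, huv, huk]
  have hJ := jacobi huv huk hvk hμ1 hμ2 z
  have key : ∀ σ : Equiv.Perm (Fin (n+1)), (∀ i, i ∉ S → σ i = i) → (∀ x, μ (σ x) = μ x) →
      omap μ (res (σ u) (σ k) (res (σ u) (σ v) z)) = omap μ w := by
    intro σ hσ hσμ
    conv_lhs => rw [← hz.2 σ hσ]
    rw [← res_perm huv, ← res_perm huk, omap_omap]
    congr 2
    funext x; exact hσμ x
  have fixo : ∀ σ : Equiv.Perm (Fin (n+1)), (∀ i, i ≠ u → i ≠ v → i ≠ k → σ i = i) →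
      (μ (σ u) = u) → μ (σ v) = u → μ (σ k) = u → ∀ x, μ (σ x) = μ x := by
    intro σ h0 hu hv hk x
    by_cases h1 : x = u
    · rw [h1, hu]; simp [μ]
    by_cases h2 : x = v
    · rw [h2, hv]; simp [μ]
    by_cases h3 : x = k
    · rw [h3, hk]; simp [μ]
    rw [h0 x h1 h2 h3]
  have e1 : (Equiv.swap u v * Equiv.swap v k) u = v := by
    simp [Equiv.swap_apply_of_ne_of_ne huv huk]
  have e2 : (Equiv.swap u v * Equiv.swap v k) v = k := by
    simp [Equiv.swap_apply_of_ne_of_ne huk.symm hvk.symm]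
  have e3 : (Equiv.swap u v * Equiv.swap v k) k = u := by simp
  have e4 : (Equiv.swap u k * Equiv.swap v k) u = k := by
    simp [Equiv.swap_apply_of_ne_of_ne huv huk]
  have e5 : (Equiv.swap u k * Equiv.swap v k) v = u := by simp
  have e6 : (Equiv.swap u k * Equiv.swap v k) k = v := by
    simp [Equiv.swap_apply_of_ne_of_ne huv.symm hvk]
  have s1 := key (Equiv.swap u v * Equiv.swap v k) (by
      intro i hi
      have h1 : i ≠ u := fun h => hi (h ▸ hu)
      have h2 : i ≠ v := fun h => hi (h ▸ hv)
      have h3 : i ≠ k := fun h => hi (h ▸ hk)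
      simp [Equiv.swap_apply_of_ne_of_ne, h1, h2, h3]) (by
      refine fixo _ (fun i h1 h2 h3 => by simp [Equiv.swap_apply_of_ne_of_ne, h1, h2, h3]) ?_ ?_ ?_
      · rw [e1]; simp [μ]
      · rw [e2]; simp [μ]
      · rw [e3]; simp [μ])
  have s2 := key (Equiv.swap u k * Equiv.swap v k) (by
      intro i hi
      have h1 : i ≠ u := fun h => hi (h ▸ hu)
      have h2 : i ≠ v := fun h => hi (h ▸ hv)
      have h3 : i ≠ k := fun h => hi (h ▸ hk)
      simp [Equiv.swap_apply_of_ne_of_ne, h1, h2, h3]) (by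
      refine fixo _ (fun i h1 h2 h3 => by simp [Equiv.swap_apply_of_ne_of_ne, h1, h2, h3]) ?_ ?_ ?_
      · rw [e4]; simp [μ]
      · rw [e5]; simp [μ]
      · rw [e6]; simp [μ])
  rw [e1, e2, e3] at s1
  rw [e4, e5, e6] at s2
  rw [s1, s2] at hJ
  have hwm : w ∈ AS ((S.erase v).erase k) := by
    refine res_mem huk (S := S.erase v) ?_ (res_mem huv (S := S) ?_ hz.1)
    · intro i hi; simp only [mrg]; split_ifs <;> simp_all
    · intro i hi; simp only [mrg]; split_ifs <;> simp_all
  have hfix : omap μ w = w := omap_fix (by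
    intro i hi; simp at hi; simp [μ, hi]) hwm
  rw [← hw, hfix] at hJ
  have : (3 : ℚ) • w = 0 := by
    rw [show (3:ℚ) = 1+1+1 by norm_num, add_smul, add_smul, one_smul]; exact hJ
  simpa using this

lemma step2 {S : Finset (Fin (n+1))} {z : OS n} (hz : z ∈ Inv S S) {u v : Fin (n+1)}
    (hu : u ∈ S) (hv : v ∈ S) (huv : u ≠ v) : res u v z ∈ AS ((S.erase v).erase u) := by
  have hb : res u v z ∈ AS (S.erase v) := res_mem huv (S := S) (by
    intro i hi; simp only [mrg]; split_ifs <;> simp_all) hz.1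
  have hins : insert u ((S.erase v).erase u) = S.erase v :=
    Finset.insert_erase (by simp [huv, hu])
  refine detect (Finset.notMem_erase _ _) (by rwa [hins]) ?_
  intro k hk
  simp at hk
  obtain ⟨hku, hkv, hkS⟩ := hk
  have hku : k ≠ u := hku
  have hkv : k ≠ v := hkv
  have h0 := step1 hz hu hv hkS huv hku.symm hkv.symm
  have h1 := omap_res_symm (μ := mrg k u) hku (by simp [mrg, hku]) (res u v z)
  rw [h0, map_zero] at h1
  rw [← h1]
  symm
  refine omap_fix (S := (S.erase v).erase u) ?_ (res_mem hku (S := S.erase v) ?_ hb)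
  · intro i hi; simp at hi; simp [mrg, hi]
  · intro i hi; simp only [mrg]; split_ifs <;> simp_all

lemma step3 {S : Finset (Fin (n+1))} {z : OS n} (hz : z ∈ Inv S S) {u v i j : Fin (n+1)}
    (hu : u ∈ S) (hv : v ∈ S) (huv : u ≠ v) (hi : i ∈ S) (hj : j ∈ S) (hij : i ≠ j)
    (hiu : i ≠ u) (hiv : i ≠ v) (hju : j ≠ u) (hjv : j ≠ v) : res i j (res u v z) = 0 := by
  set w := res i j (res u v z) with hw
  have hanti : w = - res u v (res i j z) := res_anticomm hij huv hiu hiv hju hjv z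
  have m1 : w ∈ AS (((S.erase v).erase u).erase j) := by
    refine res_mem hij (S := (S.erase v).erase u) ?_ (step2 hz hu hv huv)
    intro x hx; simp only [mrg]; split_ifs <;> simp_all
  have m2 : w ∈ AS (((S.erase j).erase i).erase v) := by
    rw [hanti]
    refine neg_mem (res_mem huv (S := (S.erase j).erase i) ?_ (step2 hz hi hj hij))
    intro x hx; simp only [mrg]; split_ifs <;> grind
  have f1 : omap (Equiv.swap u v) w = w := swap_fix (by simp) (by simp) m1
  have f2 : omap (Equiv.swap v i) w = w := swap_fix (by simp) (by simp) m2
  have f3 : omap (Equiv.swap v j) w = w := swap_fix (by simp) (by simp) m1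
  have f4 : omap (Equiv.swap u i) w = w := by
    have : Equiv.swap u i = Equiv.swap u v * Equiv.swap v i * Equiv.swap u v := by
      ext x
      simp only [Equiv.Perm.mul_apply, Equiv.swap_apply_def]
      grind
    rw [this, omap_mul, omap_mul, f1, f2, f1]
  have f5 : omap (Equiv.swap u i * Equiv.swap v j : Equiv.Perm (Fin (n+1))) w = - w := by
    have hσ : omap (Equiv.swap u i * Equiv.swap v j : Equiv.Perm (Fin (n+1))) z = z := by
      apply hz.2
      intro x hx
      have h1 : x ≠ u := fun h => hx (h ▸ hu)
      have h2 : x ≠ v := fun h => hx (h ▸ hv)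
      have h3 : x ≠ i := fun h => hx (h ▸ hi)
      have h4 : x ≠ j := fun h => hx (h ▸ hj)
      simp [Equiv.swap_apply_of_ne_of_ne, h1, h2, h3, h4]
    have e1 : (Equiv.swap u i * Equiv.swap v j) u = i := by
      simp [Equiv.swap_apply_of_ne_of_ne huv hju.symm]
    have e2 : (Equiv.swap u i * Equiv.swap v j) i = u := by
      simp [Equiv.swap_apply_of_ne_of_ne hiv hij]
    have e3 : (Equiv.swap u i * Equiv.swap v j) v = j := by
      simp [Equiv.swap_apply_of_ne_of_ne hju hij.symm]
    have e4 : (Equiv.swap u i * Equiv.swap v j) j = v := by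
      simp [Equiv.swap_apply_of_ne_of_ne huv.symm hiv.symm]
    conv_lhs => rw [hw]
    rw [res_perm hij, res_perm huv, hσ, e1, e2, e3, e4, hanti, neg_neg]
  rw [omap_mul, f3, f4] at f5
  have : (2 : ℚ) • w = 0 := by
    rw [two_smul]; nth_rewrite 1 [f5]; simp
  simpa using this

lemma res_scalar {S : Finset (Fin (n+1))} {z : OS n} (hz : z ∈ Inv S S) {u v : Fin (n+1)}
    (hu : u ∈ S) (hv : v ∈ S) (huv : u ≠ v) : ∃ r, res u v z = algebraMap ℚ _ r := by
  refine scalar_of_res (step2 hz hu hv huv) ?_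
  intro i hi j hj hij
  simp at hi hj
  exact step3 hz hu hv huv hi.2.2 hj.2.2 hij hi.1 hi.2.1 hj.1 hj.2.1

/-- any two ordered pairs of distinct elements of `S` are related by a permutation -/
lemma res_eq_of_inv {S : Finset (Fin (n+1))} {z : OS n} (hz : z ∈ Inv S S) {u v u' v' : Fin (n+1)}
    (hu : u ∈ S) (hv : v ∈ S) (huv : u ≠ v) (hu' : u' ∈ S) (hv' : v' ∈ S) (huv' : u' ≠ v') {r : ℚ}
    (h : res u v z = algebraMap ℚ _ r) : res u' v' z = algebraMap ℚ _ r := by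
  have hS : ∀ a b, a ∈ S → b ∈ S → ∀ i, i ∉ S → Equiv.swap a b i = i := by
    intro a b ha hb i hi
    exact Equiv.swap_apply_of_ne_of_ne (fun h => hi (h ▸ ha)) (fun h => hi (h ▸ hb))
  let τ := Equiv.swap u u'
  have hτv : τ v ∈ S := (perm_mem (hS u u' hu hu') v).mp hv
  let σ : Equiv.Perm (Fin (n+1)) := Equiv.swap (τ v) v' * τ
  have hσ : omap σ z = z := by
    rw [omap_mul, hz.2 _ (hS u u' hu hu'), hz.2 _ (hS _ _ hτv hv')]
  have hτ : τ u = u' := Equiv.swap_apply_left _ _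
  have e1 : σ u = u' := by
    simp only [σ, Equiv.Perm.mul_apply, hτ]
    refine Equiv.swap_apply_of_ne_of_ne ?_ huv'
    rw [← hτ]; exact fun h => huv (τ.injective h)
  have e2 : σ v = v' := by simp [σ]
  have := res_perm huv σ z
  rw [hσ, e1, e2, h, AlgHom.commutes] at this
  exact this.symm

/-- The invariants of the full symmetric group. -/
theorem full_inv {S : Finset (Fin (n+1))} {z : OS n} (hz : z ∈ Inv S S) :
    ∃ r s : ℚ, z = r • 1 + s • aS S := by
  by_cases hS : ∃ u ∈ S, ∃ v ∈ S, u ≠ v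
  · obtain ⟨u, hu, v, hv, huv⟩ := hS
    obtain ⟨s, hs⟩ := res_scalar hz hu hv huv
    have : ∃ r, z - s • aS S = algebraMap ℚ _ r := by
      refine scalar_of_res (S := S) (sub_mem hz.1 (Subalgebra.smul_mem _ (aS_mem (Finset.Subset.refl _)).1 _)) ?_
      intro i hi j hj hij
      rw [map_sub, map_smul, res_aS hi hj hij, res_eq_of_inv hz hu hv huv hi hj hij hs,
        Algebra.algebraMap_eq_smul_one, sub_self]
    obtain ⟨r, hr⟩ := this
    refine ⟨r, s, ?_⟩
    rw [← Algebra.algebraMap_eq_smul_one, ← hr]; abel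
  · have : ∃ r, z = algebraMap ℚ _ r := by
      refine scalar_of_res hz.1 ?_
      intro i hi j hj hij
      exact absurd ⟨i, hi, j, hj, hij⟩ hS
    obtain ⟨r, hr⟩ := this
    exact ⟨r, 0, by rw [zero_smul, add_zero, hr, Algebra.algebraMap_eq_smul_one]⟩

end OSaux

namespace OSaux
set_option linter.all false

variable {n : ℕ}

/-- the span of the generators -/
def L1 (n : ℕ) : Submodule ℚ (OS n) := Submodule.span ℚ {x | ∃ i j, x = eOS n i j}

lemma e_L1 (i j : Fin (n+1)) : eOS n i j ∈ L1 n := Submodule.subset_span ⟨i, j, rfl⟩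

lemma aS_L1 (S : Finset (Fin (n+1))) : aS S ∈ L1 n :=
  Submodule.smul_mem _ _ (sum_mem fun i _ => sum_mem fun j _ => e_L1 i j)

lemma mS_L1 (S : Finset (Fin (n+1))) (r : Fin (n+1)) : mS S r ∈ L1 n :=
  sum_mem fun i _ => e_L1 i r

lemma al_L1 {x : OS n} (hx : x ∈ L1 n) : al x = - x := by
  induction hx using Submodule.span_induction with
  | mem x h => obtain ⟨i, j, rfl⟩ := h; exact al_e i j
  | zero => simp
  | add x y _ _ hx hy => rw [map_add, hx, hy, neg_add]
  | smul r x _ hx => rw [map_smul, hx, smul_neg]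

lemma anti_L1 {x y : OS n} (hx : x ∈ L1 n) (hy : y ∈ L1 n) : x * y + y * x = 0 := by
  induction hx using Submodule.span_induction with
  | mem x h =>
    obtain ⟨i, j, rfl⟩ := h
    induction hy using Submodule.span_induction with
    | mem x h => obtain ⟨k, l, rfl⟩ := h; exact e_anti i j k l
    | zero => simp
    | add x y _ _ hx hy => 
      have : eOS n i j * (x + y) + (x + y) * eOS n i j = (eOS n i j * x + x * eOS n i j) +
        (eOS n i j * y + y * eOS n i j) := by noncomm_ring
      rw [this, hx, hy, add_zero]
    | smul r x _ hx => rw [mul_smul_comm, smul_mul_assoc, ← smul_add, hx, smul_zero]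
  | zero => simp
  | add x z _ _ hx hz => 
      have : (x + z) * y + y * (x + z) = (x * y + y * x) + (z * y + y * z) := by noncomm_ring
      rw [this, hx, hz, add_zero]
  | smul r x _ hx => rw [mul_smul_comm, smul_mul_assoc, ← smul_add, hx, smul_zero]

lemma sq_L1 {x : OS n} (hx : x ∈ L1 n) : x * x = 0 := by
  have h := anti_L1 hx hx
  have h2 : (2 : ℚ) • (x * x) = 0 := by rw [two_smul]; exact h
  simpa using h2

lemma e_comm (i j k l : Fin (n+1)) (z : OS n) : Commute (eOS n i j * eOS n k l) z := by
  induction z using os_induction with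
  | hs r => exact (Algebra.commutes r _).symm
  | hg s t =>
    have h1 := e_anti (n := n) i j s t
    have h2 := e_anti (n := n) k l s t
    rw [add_eq_zero_iff_eq_neg] at h1 h2
    show _ * _ = _ * _
    rw [mul_assoc, h2, mul_neg, ← mul_assoc, h1, neg_mul, neg_neg, mul_assoc]
  | ha x y hx hy => exact hx.add_right hy
  | hm x y hx hy => exact hx.mul_right hy

lemma cS_comm (S : Finset (Fin (n+1))) (r : Fin (n+1)) (z : OS n) : Commute (cS S r) z :=
  Commute.sum_left _ _ _ fun i _ => Commute.sum_left _ _ _ fun j _ => e_comm _ _ _ _ z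

lemma al_cS (S : Finset (Fin (n+1))) (r : Fin (n+1)) : al (cS S r) = cS S r := by
  simp [cS, map_sum]

section formulas
variable {S : Finset (Fin (n+1))} {u r : Fin (n+1)}

lemma aS_insert (hu : u ∉ S) : aS (insert u S) = aS S + mS S u := by
  simp only [aS, mS, Finset.sum_insert hu, e_diag, zero_add, Finset.sum_add_distrib]
  have : ∑ i ∈ S, eOS n u i = ∑ i ∈ S, eOS n i u := Finset.sum_congr rfl fun i _ => e_symm _ _
  rw [this]; module

lemma aS_empty_single (u : Fin (n+1)) : aS ({u} : Finset (Fin (n+1))) = 0 := by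
  simp [aS, e_diag]

lemma mrg_fix (hr : r ∉ S) : ∀ i ∈ S, mrg u r i = i := by
  intro i hi
  have : i ≠ r := by rintro rfl; exact hr hi
  simp [mrg, this]

lemma pi_a (hr : r ∉ S) : omap (mrg u r) (aS S) = aS S :=
  omap_fix (mrg_fix hr) (aS_mem (Finset.Subset.refl S)).1

lemma res_a (hur : u ≠ r) (hr : r ∉ S) : res u r (aS S) = 0 :=
  res_zero hur hr (aS_mem (Finset.Subset.refl S)).1

lemma pi_m (hu : u ∉ S) (hr : r ∉ insert u S) : omap (mrg u r) (mS (insert u S) r) = mS S u := by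
  simp only [mS, map_sum, omap_e]
  rw [Finset.sum_congr rfl (fun i hi => by rw [mrg_fix hr i hi])]
  simp [Finset.sum_insert hu, mrg, e_diag]

lemma ind_one (hur : u ≠ r) (i : Fin (n+1)) : ind u r i r = if i = u then 1 else 0 := by
  unfold ind; split_ifs <;> grind

lemma res_m (hur : u ≠ r) (hu : u ∈ S) : res u r (mS S r) = 1 := by
  simp only [mS, map_sum, res_e hur, ind_one hur]
  rw [← map_sum]; simp [hu]

lemma pi_c (hu : u ∉ S) (hr : r ∉ insert u S) : omap (mrg u r) (cS (insert u S) r) = cS S u := by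
  simp only [cS, map_sum, map_mul, omap_e]
  rw [Finset.sum_congr rfl (fun i hi => Finset.sum_congr rfl (fun j hj => by
    rw [mrg_fix hr i hi, mrg_fix hr j hj]))]
  simp [Finset.sum_insert hu, mrg, e_diag, e_sq]

lemma res_c (hu : u ∉ S) (hr : r ∉ insert u S) (hur : u ≠ r) :
    res u r (cS (insert u S) r) = mS S u := by
  have h : ∀ i ∈ insert u S, ∀ j ∈ insert u S, res u r (eOS n i j * eOS n i r) =
      if i = u then eOS n i j else 0 := by
    intro i hi j hj
    rw [res_mul hur, res_zero hur hr (e_mem hi hj), zero_mul, add_zero, res_e hur, ind_one hur,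
      omap_e, mrg_fix hr i hi, mrg_fix hr j hj]
    split_ifs <;> simp
  simp only [cS, map_sum]
  rw [Finset.sum_congr rfl (fun i hi => Finset.sum_congr rfl (fun j hj => h i hi j hj))]
  rw [Finset.sum_eq_single_of_mem u (Finset.mem_insert_self _ _)]
  · simp [Finset.sum_insert hu, e_diag, mS, e_symm u]
  · intro j _ hj; simp [hj]

lemma res_cpow (hu : u ∉ S) (hr : r ∉ insert u S) (hur : u ≠ r) (d : ℕ) :
    res u r (cS (insert u S) r ^ (d+1)) = (d+1 : ℚ) • (mS S u * cS S u ^ d) := by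
  induction d with
  | zero => simp [res_c hu hr hur]
  | succ d ih =>
    rw [pow_succ, res_mul hur, ih, map_pow, pi_c hu hr, res_c hu hr hur, al_cS,
      ((cS_comm S u (mS S u)).pow_left _).eq, smul_mul_assoc, mul_assoc, ← pow_succ]
    push_cast; module

lemma res_mc (hu : u ∉ S) (hr : r ∉ insert u S) (hur : u ≠ r) (d : ℕ) :
    res u r (mS (insert u S) r * cS (insert u S) r ^ d) = cS S u ^ d := by
  rw [res_mul hur, res_m hur (Finset.mem_insert_self _ _), one_mul, map_pow (omap (mrg u r)), map_pow al, pi_c hu hr,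
    al_cS, pi_m hu hr]
  cases d with
  | zero => simp [res_one hur]
  | succ d =>
    rw [res_cpow hu hr hur, mul_smul_comm, ← mul_assoc, sq_L1 (mS_L1 _ _)]; simp

lemma res_ac (hu : u ∉ S) (hr : r ∉ insert u S) (hur : u ≠ r) (d : ℕ) :
    res u r (aS (insert u S) * cS (insert u S) r ^ (d+1)) =
      (d+1 : ℚ) • (aS S * mS S u * cS S u ^ d) := by
  rw [res_mul hur, res_a hur hr, zero_mul, add_zero, pi_a hr, res_cpow hu hr hur, aS_insert hu,
    mul_smul_comm, ← mul_assoc, add_mul, sq_L1 (mS_L1 _ _), add_zero]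

lemma res_amc (hu : u ∉ S) (hr : r ∉ insert u S) (hur : u ≠ r) (d : ℕ) :
    res u r (aS (insert u S) * mS (insert u S) r * cS (insert u S) r ^ d) =
      (aS S + mS S u) * cS S u ^ d := by
  rw [mul_assoc, res_mul hur, res_a hur hr, zero_mul, add_zero, pi_a hr, res_mc hu hr hur,
    aS_insert hu]

end formulas

/-- detection of the linear part -/
lemma exists_eta (u v : Fin (n+1)) : ∃ φ : OS n →ₐ[ℚ] DualNumber ℚ, u ≠ v →
    ∀ i j, φ (eOS n i j) = TrivSqZeroExt.inr (ind u v i j) := by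
  by_cases huv : u = v
  · obtain ⟨φ, _⟩ := exists_lift (n := n) (C := DualNumber ℚ) (fun i j => 0) (by simp) (by simp)
      (by simp) (by simp)
    exact ⟨φ, fun h => absurd huv h⟩
  · obtain ⟨φ, h⟩ := exists_lift (n := n) (C := DualNumber ℚ)
      (fun i j => TrivSqZeroExt.inr (ind u v i j))
      (by intro i
          have : ind u v i i = 0 := by
            unfold ind; rw [if_neg]; rintro (⟨rfl, h⟩ | ⟨rfl, h⟩)
            · exact huv h
            · exact huv h.symm
          simp [this])
      (fun i j => by rw [ind_symm']) (by simp) (by simp)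
    exact ⟨φ, fun _ => h⟩

def eta (u v : Fin (n+1)) : OS n →ₐ[ℚ] DualNumber ℚ := (exists_eta u v).choose

lemma eta_e {u v : Fin (n+1)} (h : u ≠ v) (i j : Fin (n+1)) :
    eta u v (eOS n i j) = TrivSqZeroExt.inr (ind u v i j) := (exists_eta u v).choose_spec h i j

lemma eta_L1 {u v : Fin (n+1)} (h : u ≠ v) {x : OS n} (hx : x ∈ L1 n) :
    (eta u v x).fst = 0 := by
  induction hx using Submodule.span_induction with
  | mem x hx => obtain ⟨i, j, rfl⟩ := hx; simp [eta_e h]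
  | zero => simp
  | add x y _ _ hx hy => simp [hx, hy]
  | smul r x _ hx => simp [hx]

lemma eta_mul {u v : Fin (n+1)} (h : u ≠ v) {x y : OS n} (hx : x ∈ L1 n) (hy : y ∈ L1 n) :
    eta u v (x * y) = 0 := by
  rw [map_mul]
  ext <;> simp [eta_L1 h hx, eta_L1 h hy]

lemma eta_c {u v : Fin (n+1)} (h : u ≠ v) (S : Finset (Fin (n+1))) (r : Fin (n+1)) :
    eta u v (cS S r) = 0 := by
  rw [cS, map_sum]
  refine Finset.sum_eq_zero fun i _ => ?_
  rw [map_sum]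
  exact Finset.sum_eq_zero fun j _ => eta_mul h (e_L1 _ _) (e_L1 _ _)


lemma sum_ind {S : Finset (Fin (n+1))} {u v : Fin (n+1)} (hu : u ∈ S) (hv : v ∈ S) (huv : u ≠ v) :
    ∑ i ∈ S, ∑ j ∈ S, ind u v i j = 2 := by
  have : ∀ i j, ind u v i j = (if i = u then (if j = v then 1 else 0) else 0) +
      (if i = v then (if j = u then 1 else 0) else 0) := by
    intro i j; unfold ind; split_ifs <;> grind
  simp only [this, Finset.sum_add_distrib]
  have h1 : ∀ a b, a ∈ S → b ∈ S →
      ∑ i ∈ S, ∑ j ∈ S, (if i = a then (if j = b then (1:ℚ) else 0) else 0) = 1 := by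
    intro a b ha hb
    rw [Finset.sum_eq_single_of_mem a ha, Finset.sum_eq_single_of_mem b hb]
    · simp
    · intro j _ hj; simp [hj]
    · intro j _ hj; simp [hj]
  rw [h1 u v hu hv, h1 v u hv hu]; norm_num

lemma eta_a {S : Finset (Fin (n+1))} {u v : Fin (n+1)} (hu : u ∈ S) (hv : v ∈ S) (huv : u ≠ v) :
    (eta u v (aS S)).snd = 1 := by
  have h : eta u v (aS S) = TrivSqZeroExt.inr 1 := by
    simp only [aS, map_smul, map_sum, eta_e huv]
    simp only [← TrivSqZeroExt.inr_sum, sum_ind hu hv huv]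
    rw [← TrivSqZeroExt.inr_smul]; norm_num
  simp [h]

lemma ind_1a {S : Finset (Fin (n+1))} {u v : Fin (n+1)} (hu : u ∈ S) (hv : v ∈ S) (huv : u ≠ v)
    {s t : ℚ} (h : eta u v (s • 1 + t • aS S) = 0) : s = 0 ∧ t = 0 := by
  have h1 := congrArg TrivSqZeroExt.fst h
  have h2 := congrArg TrivSqZeroExt.snd h
  simp [eta_L1 huv (aS_L1 S)] at h1
  simp [eta_a hu hv huv] at h2
  exact ⟨h1, h2⟩

end OSaux

namespace OSaux
set_option linter.all false

variable {n : ℕ}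

lemma vanish {S : Finset (Fin (n+1))} {u r : Fin (n+1)} (hu : u ∈ S) (hr : r ∉ S) {z : OS n}
    (hz : z ∈ Inv (insert r S) S) (h : res u r z = 0) : z ∈ Inv S S := by
  refine ⟨detect hr hz.1 ?_, hz.2⟩
  intro i hi
  have hur : u ≠ r := by rintro rfl; exact hr hu
  have hσ : ∀ x, x ∉ S → Equiv.swap u i x = x := by
    intro x hx
    have h1 : x ≠ u := by rintro rfl; exact hx hu
    have h2 : x ≠ i := by rintro rfl; exact hx hi
    exact Equiv.swap_apply_of_ne_of_ne h1 h2
  have := res_perm hur (Equiv.swap u i) z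
  rw [hz.2 _ hσ, h, map_zero, Equiv.swap_apply_left, hσ r hr] at this
  exact this.symm

lemma vanish' {S : Finset (Fin (n+1))} {u v r : Fin (n+1)} (hu : u ∈ S) (hv : v ∈ S) (huv : u ≠ v)
    (hr : r ∉ S) {z : OS n}
    (hz : z ∈ Inv (insert r S) S) (h : res u r z = 0) (he : eta u v z = 0) : z = 0 := by
  obtain ⟨s, t, rfl⟩ := full_inv (vanish hu hr hz h)
  obtain ⟨rfl, rfl⟩ := ind_1a hu hv huv he
  simp

lemma mon_mem {S : Finset (Fin (n+1))} {r : Fin (n+1)} (hr : r ∉ S) (x y d : ℕ) :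
    aS S ^ x * mS S r ^ y * cS S r ^ d ∈ Inv (insert r S) S :=
  Inv_mul (Inv_mul (Inv_pow (aS_mem (Finset.subset_insert _ _)) _) (Inv_pow (mS_mem hr) _))
    (Inv_pow (cS_mem hr) _)

lemma c_mem {S : Finset (Fin (n+1))} {r : Fin (n+1)} (hr : r ∉ S) (d : ℕ) :
    cS S r ^ d ∈ Inv (insert r S) S := by simpa using mon_mem hr 0 0 d
lemma ac_mem {S : Finset (Fin (n+1))} {r : Fin (n+1)} (hr : r ∉ S) (d : ℕ) :
    aS S * cS S r ^ d ∈ Inv (insert r S) S := by simpa using mon_mem hr 1 0 d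
lemma mc_mem {S : Finset (Fin (n+1))} {r : Fin (n+1)} (hr : r ∉ S) (d : ℕ) :
    mS S r * cS S r ^ d ∈ Inv (insert r S) S := by simpa using mon_mem hr 0 1 d
lemma amc_mem {S : Finset (Fin (n+1))} {r : Fin (n+1)} (hr : r ∉ S) (d : ℕ) :
    aS S * mS S r * cS S r ^ d ∈ Inv (insert r S) S := by simpa using mon_mem hr 1 1 d

lemma split_set {S : Finset (Fin (n+1))} {k : ℕ} (hk : S.card = k + 2) :
    ∃ u S' v, u ∉ S' ∧ S = insert u S' ∧ S'.card = k + 1 ∧ v ∈ S' := by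
  obtain ⟨u, S', hu, rfl, hc⟩ := Finset.card_eq_succ.mp hk
  have : S'.Nonempty := by rw [← Finset.card_pos]; omega
  obtain ⟨v, hv⟩ := this
  exact ⟨u, S', v, hu, rfl, hc, hv⟩

def RelE (S : Finset (Fin (n+1))) (r : Fin (n+1)) (q : ℕ) : Prop :=
  cS S r ^ (q+1) = aS S * mS S r * cS S r ^ q
def RelO (S : Finset (Fin (n+1))) (r : Fin (n+1)) (q : ℕ) : Prop :=
  aS S * cS S r ^ q = (q : ℚ) • (mS S r * cS S r ^ q)

lemma relE_of {S : Finset (Fin (n+1))} {r : Fin (n+1)} {q : ℕ} (hr : r ∉ S)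
    (hS : S.card = 2 * q + 2) (h : ∀ (S : Finset (Fin (n+1))) r, r ∉ S → S.card = 2 * q + 1 →
      RelO S r q) : RelE S r q := by
  obtain ⟨u, S', v, hu, rfl, hc, hv⟩ := split_set (k := 2*q) (by omega)
  have huv : u ≠ v := by rintro rfl; exact hu hv
  have hur : u ≠ r := by rintro rfl; exact hr (Finset.mem_insert_self _ _)
  have hO := h S' u hu hc
  refine sub_eq_zero.mp (vanish' (Finset.mem_insert_self _ _) (Finset.mem_insert_of_mem hv) huv hr
    (sub_mem (c_mem hr _) (amc_mem hr _)) ?_ ?_)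
  · rw [map_sub, res_cpow hu hr hur, res_amc hu hr hur, add_mul, hO]; module
  · rw [map_sub, map_mul, eta_mul huv (aS_L1 _) (mS_L1 _ _), map_pow, eta_c huv]; simp

lemma relO_of {S : Finset (Fin (n+1))} {r : Fin (n+1)} {q : ℕ} (hr : r ∉ S)
    (hS : S.card = 2 * q + 3) (h : ∀ (S : Finset (Fin (n+1))) r, r ∉ S → S.card = 2 * q + 2 →
      RelE S r q) : RelO S r (q+1) := by
  obtain ⟨u, S', v, hu, rfl, hc, hv⟩ := split_set (k := 2*q+1) (by omega)
  have huv : u ≠ v := by rintro rfl; exact hu hv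
  have hur : u ≠ r := by rintro rfl; exact hr (Finset.mem_insert_self _ _)
  have hE := h S' u hu hc
  refine sub_eq_zero.mp (vanish' (Finset.mem_insert_self _ _) (Finset.mem_insert_of_mem hv) huv hr
    (sub_mem (ac_mem hr _) (Submodule.smul_mem _ _ (mc_mem hr _))) ?_ ?_)
  · rw [map_sub, map_smul, res_ac hu hr hur, res_mc hu hr hur, hE]; push_cast; module
  · rw [map_sub, map_smul, map_mul, map_mul, map_pow, eta_c huv]; simp

lemma rels (q : ℕ) : (∀ (S : Finset (Fin (n+1))) r, r ∉ S → S.card = 2 * q + 1 → RelO S r q) ∧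
    (∀ (S : Finset (Fin (n+1))) r, r ∉ S → S.card = 2 * q + 2 → RelE S r q) := by
  induction q with
  | zero =>
    have h0 : ∀ (S : Finset (Fin (n+1))) r, r ∉ S → S.card = 2 * 0 + 1 → RelO S r 0 := by
      intro S r hr hS
      obtain ⟨u, rfl⟩ := Finset.card_eq_one.mp (by simpa using hS)
      simp [RelO, aS_empty_single]
    exact ⟨h0, fun S r hr hS => relE_of hr hS h0⟩
  | succ q ih =>
    have h0 : ∀ (S : Finset (Fin (n+1))) r, r ∉ S → S.card = 2 * (q+1) + 1 → RelO S r (q+1) :=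
      fun S r hr hS => relO_of hr (by omega) ih.2
    exact ⟨h0, fun S r hr hS => relE_of hr (by omega) h0⟩

/-- the proposed basis -/
def Bset (k : ℕ) (a m c : OS n) : Set (OS n) :=
  if Even k then
      {x | ∃ ε ∈ ({0,1} : Set ℕ), ∃ δ ∈ ({0,1} : Set ℕ), ∃ d < (k+1)/2,
        x = a ^ ε * m ^ δ * c ^ d}
      else
      {x | ∃ ε ∈ ({0,1} : Set ℕ), ∃ δ ∈ ({0,1} : Set ℕ), ∃ d < (k+1)/2 - 1,
        x = a ^ ε * m ^ δ * c ^ d} ∪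
      {c ^ ((k+1)/2 - 1),
        a * c ^ ((k+1)/2 - 1) + m * c ^ ((k+1)/2 - 1)}

def F4 (q : ℕ) (a m c : OS n) : Set (OS n) :=
  {x | ∃ ε ∈ ({0,1} : Set ℕ), ∃ δ ∈ ({0,1} : Set ℕ), ∃ d < q, x = a ^ ε * m ^ δ * c ^ d}

lemma Bset_even (q : ℕ) (a m c : OS n) : Bset (2*q) a m c = F4 q a m c := by
  have h2 : (2 * q + 1)/2 = q := by omega
  rw [Bset, if_pos (by simp), h2, F4]

lemma Bset_odd (q : ℕ) (a m c : OS n) :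
    Bset (2*q+1) a m c = F4 q a m c ∪ {c ^ q, a * c ^ q + m * c ^ q} := by
  have h2 : (2 * q + 1 + 1)/2 - 1 = q := by omega
  rw [Bset, if_neg (by simp), h2, F4]

lemma F4_c {q d : ℕ} (h : d < q) (a m c : OS n) : c ^ d ∈ F4 q a m c :=
  ⟨0, by simp, 0, by simp, d, h, by simp⟩
lemma F4_ac {q d : ℕ} (h : d < q) (a m c : OS n) : a * c ^ d ∈ F4 q a m c :=
  ⟨1, by simp, 0, by simp, d, h, by simp⟩
lemma F4_mc {q d : ℕ} (h : d < q) (a m c : OS n) : m * c ^ d ∈ F4 q a m c :=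
  ⟨0, by simp, 1, by simp, d, h, by simp⟩
lemma F4_amc {q d : ℕ} (h : d < q) (a m c : OS n) : a * m * c ^ d ∈ F4 q a m c :=
  ⟨1, by simp, 1, by simp, d, h, by simp⟩

lemma F4_sub {q : ℕ} {a m c : OS n} {X : Submodule ℚ (OS n)}
    (h : ∀ d < q, c ^ d ∈ X ∧ a * c ^ d ∈ X ∧ m * c ^ d ∈ X ∧ a * m * c ^ d ∈ X) :
    F4 q a m c ⊆ X := by
  rintro x ⟨ε, hε, δ, hδ, d, hd, rfl⟩
  obtain ⟨h1, h2, h3, h4⟩ := h d hd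
  simp only [Set.mem_insert_iff, Set.mem_singleton_iff] at hε hδ
  rcases hε with rfl | rfl <;> rcases hδ with rfl | rfl <;> simpa

lemma F4_finite (q : ℕ) (a m c : OS n) : (F4 q a m c).Finite ∧ (F4 q a m c).ncard ≤ 4 * q := by
  classical
  let T : Finset (OS n) := ((Finset.range 2 ×ˢ Finset.range 2) ×ˢ Finset.range q).image
    (fun p => a ^ p.1.1 * m ^ p.1.2 * c ^ p.2)
  have hT : F4 q a m c ⊆ T := by
    rintro x ⟨ε, hε, δ, hδ, d, hd, rfl⟩
    simp only [T, Finset.coe_image]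
    refine ⟨((ε, δ), d), ?_, rfl⟩
    simp only [Set.mem_insert_iff, Set.mem_singleton_iff] at hε hδ
    simp; omega
  refine ⟨T.finite_toSet.subset hT, (Set.ncard_le_ncard hT T.finite_toSet).trans ?_⟩
  rw [Set.ncard_coe_finset]
  refine Finset.card_image_le.trans ?_
  simp

lemma Bset_finite (k : ℕ) (a m c : OS n) :
    (Bset k a m c).Finite ∧ (Bset k a m c).ncard ≤ 2 * k := by
  obtain ⟨q, rfl | rfl⟩ := Nat.even_or_odd' k
  · rw [Bset_even]
    have := F4_finite q a m c
    exact ⟨this.1, by omega⟩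
  · rw [Bset_odd]
    have := F4_finite q a m c
    refine ⟨this.1.union (by simp), (Set.ncard_union_le _ _).trans ?_⟩
    have h2 := Set.ncard_insert_le (c ^ q) {a * c ^ q + m * c ^ q}
    rw [Set.ncard_singleton] at h2
    omega

lemma Bset_sub {k : ℕ} {S : Finset (Fin (n+1))} {r : Fin (n+1)} (hr : r ∉ S) :
    Bset k (aS S) (mS S r) (cS S r) ⊆ Inv (insert r S) S := by
  have h : ∀ q, F4 q (aS S) (mS S r) (cS S r) ⊆ Inv (insert r S) S := fun q =>
    F4_sub fun d _ => ⟨c_mem hr d, ac_mem hr d, mc_mem hr d, amc_mem hr d⟩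
  obtain ⟨q, rfl | rfl⟩ := Nat.even_or_odd' k
  · rw [Bset_even]; exact h q
  · rw [Bset_odd]
    refine Set.union_subset (h q) ?_
    rintro x (rfl | rfl)
    · exact c_mem hr q
    · exact add_mem (ac_mem hr q) (mc_mem hr q)

lemma res_Inv {S : Finset (Fin (n+1))} {u r : Fin (n+1)} (hu : u ∉ S) (hr : r ∉ insert u S)
    (hur : u ≠ r) {z : OS n} (hz : z ∈ Inv (insert r (insert u S)) (insert u S)) :
    res u r z ∈ Inv (insert u S) S := by
  constructor
  · refine res_mem hur ?_ hz.1
    intro i hi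
    simp only [mrg]
    split_ifs with h
    · exact Finset.mem_insert_self _ _
    · exact (Finset.mem_insert.mp hi).resolve_left h
  · intro σ hσ
    have h1 : ∀ i, i ∉ insert u S → σ i = i := fun i hi => hσ i fun h => hi
      (Finset.mem_insert_of_mem h)
    rw [res_perm hur, hz.2 σ h1, hσ u hu, h1 r hr]

/-- the residue map is onto already on the span -/
lemma surj_even {q : ℕ} {S : Finset (Fin (n+1))} {u r : Fin (n+1)} (hu : u ∉ S)
    (hr : r ∉ insert u S) (hur : u ≠ r) :
    Submodule.span ℚ (Bset (2*q+1) (aS S) (mS S u) (cS S u)) ≤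
    Submodule.map (res u r) (Submodule.span ℚ (Bset (2*(q+1)) (aS (insert u S))
      (mS (insert u S) r) (cS (insert u S) r))) := by
  rw [Bset_even, Bset_odd, Submodule.span_le]
  set X := Submodule.map (res u r) (Submodule.span ℚ (F4 (q+1) (aS (insert u S))
      (mS (insert u S) r) (cS (insert u S) r))) with hX
  have mem : ∀ y ∈ F4 (q+1) (aS (insert u S)) (mS (insert u S) r) (cS (insert u S) r),
    res u r y ∈ X := fun y hy => Submodule.mem_map_of_mem (Submodule.subset_span hy)
  have h1 : ∀ d < q+1, cS S u ^ d ∈ X := fun d hd => by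
    rw [← res_mc hu hr hur]; exact mem _ (F4_mc hd _ _ _)
  have h2 : ∀ d < q+1, (aS S + mS S u) * cS S u ^ d ∈ X := fun d hd => by
    rw [← res_amc hu hr hur]; exact mem _ (F4_amc hd _ _ _)
  have h3 : ∀ d < q, mS S u * cS S u ^ d ∈ X := fun d hd => by
    have := mem _ (F4_c (Nat.succ_lt_succ hd) _ _ _)
    rw [res_cpow hu hr hur] at this
    exact (Submodule.smul_mem_iff _ (by positivity)).mp this
  have h4 : ∀ d < q, aS S * mS S u * cS S u ^ d ∈ X := fun d hd => by
    have := mem _ (F4_ac (Nat.succ_lt_succ hd) _ _ _)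
    rw [res_ac hu hr hur] at this
    exact (Submodule.smul_mem_iff _ (by positivity)).mp this
  refine Set.union_subset (F4_sub fun d hd => ⟨h1 d (by omega), ?_, h3 d hd, h4 d hd⟩) ?_
  · have := sub_mem (h2 d (by omega)) (h3 d hd)
    rwa [add_mul, add_sub_cancel_right] at this
  · rintro x (rfl | rfl)
    · exact h1 q (by omega)
    · rw [← add_mul]; exact h2 q (by omega)

lemma surj_odd {q : ℕ} {S : Finset (Fin (n+1))} {u r : Fin (n+1)} (hu : u ∉ S)
    (hr : r ∉ insert u S) (hur : u ≠ r) (hc : S.card = 2*q+2) :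
    Submodule.span ℚ (Bset (2*(q+1)) (aS S) (mS S u) (cS S u)) ≤
    Submodule.map (res u r) (Submodule.span ℚ (Bset (2*(q+1)+1) (aS (insert u S))
      (mS (insert u S) r) (cS (insert u S) r))) := by
  rw [Bset_even, Submodule.span_le]
  set X := Submodule.map (res u r) (Submodule.span ℚ (Bset (2*(q+1)+1) (aS (insert u S))
      (mS (insert u S) r) (cS (insert u S) r))) with hX
  have mem' : ∀ y ∈ Bset (2*(q+1)+1) (aS (insert u S)) (mS (insert u S) r) (cS (insert u S) r),
    res u r y ∈ X := fun y hy => Submodule.mem_map_of_mem (Submodule.subset_span hy)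
  have mem : ∀ y ∈ F4 (q+1) (aS (insert u S)) (mS (insert u S) r) (cS (insert u S) r),
    res u r y ∈ X := fun y hy => mem' y (by rw [Bset_odd]; exact Or.inl hy)
  have hE := (rels q).2 S u hu hc
  have h1 : ∀ d < q+1, cS S u ^ d ∈ X := fun d hd => by
    rw [← res_mc hu hr hur]; exact mem _ (F4_mc hd _ _ _)
  have h2 : ∀ d < q+1, (aS S + mS S u) * cS S u ^ d ∈ X := fun d hd => by
    rw [← res_amc hu hr hur]; exact mem _ (F4_amc hd _ _ _)
  have h3 : ∀ d < q+1, mS S u * cS S u ^ d ∈ X := fun d hd => by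
    have : res u r (cS (insert u S) r ^ (d+1)) ∈ X := by
      by_cases hdq : d < q
      · exact mem _ (F4_c (Nat.succ_lt_succ hdq) _ _ _)
      · obtain rfl : d = q := by omega
        exact mem' _ (by rw [Bset_odd]; exact Or.inr (Or.inl rfl))
    rw [res_cpow hu hr hur] at this
    exact (Submodule.smul_mem_iff _ (by positivity)).mp this
  have h4 : ∀ d < q+1, aS S * mS S u * cS S u ^ d ∈ X := fun d hd => by
    by_cases hdq : d < q
    · have := mem _ (F4_ac (Nat.succ_lt_succ hdq) _ _ _)
      rw [res_ac hu hr hur] at this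
      exact (Submodule.smul_mem_iff _ (by positivity)).mp this
    · obtain rfl : d = q := by omega
      have : res u r (aS (insert u S) * cS (insert u S) r ^ (d+1) +
        mS (insert u S) r * cS (insert u S) r ^ (d+1)) ∈ X :=
        mem' _ (by rw [Bset_odd]; exact Or.inr (Or.inr rfl))
      rw [map_add, res_ac hu hr hur, res_mc hu hr hur, hE] at this
      have h5 : ((d:ℚ) + 1 + 1) • (aS S * mS S u * cS S u ^ d) ∈ X := by
        rw [add_smul _ (1:ℚ), one_smul]; exact this
      exact (Submodule.smul_mem_iff _ (by positivity)).mp h5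
  refine F4_sub fun d hd => ⟨h1 d hd, ?_, h3 d hd, h4 d hd⟩
  have := sub_mem (h2 d hd) (h3 d hd)
  rwa [add_mul, add_sub_cancel_right] at this

lemma surj {k : ℕ} {S : Finset (Fin (n+1))} {u r : Fin (n+1)} (hu : u ∉ S)
    (hr : r ∉ insert u S) (hur : u ≠ r) (hc : S.card = k+1) :
    Submodule.span ℚ (Bset (k+1) (aS S) (mS S u) (cS S u)) ≤
    Submodule.map (res u r) (Submodule.span ℚ (Bset (k+2) (aS (insert u S))
      (mS (insert u S) r) (cS (insert u S) r))) := by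
  obtain ⟨q, rfl | rfl⟩ := Nat.even_or_odd' k
  · exact surj_even hu hr hur
  · exact surj_odd hu hr hur hc

lemma one_a_mem (k : ℕ) (a m c : OS n) : 1 ∈ Bset (k+2) a m c ∧ a ∈ Bset (k+2) a m c := by
  have h : ∀ q, 1 ∈ F4 (q+1) a m c ∧ a ∈ F4 (q+1) a m c := fun q =>
    ⟨by simpa using F4_c (d := 0) (Nat.succ_pos q) a m c,
     by simpa using F4_ac (d := 0) (Nat.succ_pos q) a m c⟩
  obtain ⟨q, rfl | rfl⟩ := Nat.even_or_odd' k
  · rw [show 2*q+2 = 2*(q+1) by ring, Bset_even]; exact h q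
  · rw [show 2*q+1+2 = 2*(q+1)+1 by ring, Bset_odd]; exact ⟨Or.inl (h q).1, Or.inl (h q).2⟩

lemma finrank_pair {x y : OS n} (h : ∀ s t : ℚ, s • x + t • y = 0 → s = 0 ∧ t = 0) :
    Module.finrank ℚ (Submodule.span ℚ ({x, y} : Set (OS n))) = 2 := by
  have hl : LinearIndependent ℚ ![x, y] := LinearIndependent.pair_iff.mpr h
  have := finrank_span_eq_card hl
  have hr : Set.range ![x, y] = {x, y} := by
    rw [Matrix.range_cons, Matrix.range_cons, Matrix.range_empty]; simp [Set.pair_comm]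
  rw [hr] at this
  simpa using this

lemma main_base {S : Finset (Fin (n+1))} {r : Fin (n+1)} (hr : r ∉ S) (hc : S.card = 1) :
    Submodule.span ℚ (Bset 1 (aS S) (mS S r) (cS S r)) = Inv (insert r S) S ∧
    Module.finrank ℚ (Inv (insert r S) S) = 2 := by
  obtain ⟨u, rfl⟩ := Finset.card_eq_one.mp hc
  have hur : u ≠ r := by rintro rfl; exact hr (by simp)
  have hB : Bset 1 (aS {u}) (mS {u} r) (cS {u} r) = {1, mS {u} r} := by
    have h0 := Bset_odd 0 (aS {u}) (mS {u} r) (cS {u} r)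
    refine h0.trans ?_
    simp [F4, aS_empty_single]
  have hsp : Submodule.span ℚ (Bset 1 (aS {u}) (mS {u} r) (cS {u} r)) = Inv (insert r {u}) {u} := by
    apply le_antisymm (Submodule.span_le.mpr (Bset_sub hr))
    intro z hz
    have hsc : ∀ y : OS n, y ∈ AS {u} → ∃ t, y = algebraMap ℚ _ t := fun y hy =>
      scalar_of_res hy (fun i hi j hj hij => absurd ((Finset.mem_singleton.mp hi).trans
        (Finset.mem_singleton.mp hj).symm) hij)
    obtain ⟨s, hs⟩ := hsc _ (decomp hr hz.1)
    obtain ⟨t, ht⟩ := hsc (res u r z) (res_mem hur (S := insert r {u}) (by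
      intro i hi; simp at hi; rcases hi with rfl | rfl <;> simp [mrg]) hz.1)
    rw [Finset.sum_singleton, ht] at hs
    have hz2 : z = s • 1 + t • mS {u} r := by
      rw [← Algebra.algebraMap_eq_smul_one, ← hs, mS, Finset.sum_singleton, Algebra.smul_def]; abel
    rw [hz2, hB]
    exact add_mem (Submodule.smul_mem _ _ (Submodule.subset_span (by simp)))
      (Submodule.smul_mem _ _ (Submodule.subset_span (by simp)))
  refine ⟨hsp, ?_⟩
  rw [← hsp, hB]
  apply finrank_pair
  intro s t h
  have ht : t = 0 := by
    have h1 := congrArg (eta u r) h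
    have h2 := congrArg TrivSqZeroExt.snd h1
    simpa [mS, eta_e hur, ind_one hur] using h2
  have hs : s = 0 := by
    have h1 := congrArg (eta u r) h
    have h2 := congrArg TrivSqZeroExt.fst h1
    simpa [mS, eta_e hur, ind_one hur] using h2
  exact ⟨hs, ht⟩

theorem main_ind (k : ℕ) : ∀ (S : Finset (Fin (n+1))) (r : Fin (n+1)), r ∉ S → S.card = k+1 →
    Submodule.span ℚ (Bset (k+1) (aS S) (mS S r) (cS S r)) = Inv (insert r S) S ∧
    Module.finrank ℚ (Inv (insert r S) S) = 2 * (k+1) := by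
  induction k with
  | zero => intro S r hr hc; exact main_base hr hc
  | succ k ih =>
    intro S r hr hc
    obtain ⟨u, S', v, hu, rfl, hc', hv⟩ := split_set (k := k) (by omega)
    have huv : u ≠ v := by rintro rfl; exact hu hv
    have hur : u ≠ r := by rintro rfl; exact hr (Finset.mem_insert_self _ _)
    obtain ⟨ih1, ih2⟩ := ih S' u hu hc'
    set S := insert u S' with hS
    have huS : u ∈ S := Finset.mem_insert_self _ _
    have hvS : v ∈ S := Finset.mem_insert_of_mem hv
    have hsj := surj hu hr hur hc'
    rw [ih1] at hsj
    have hle : Submodule.span ℚ (Bset (k+2) (aS S) (mS S r) (cS S r)) ≤ Inv (insert r S) S :=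
      Submodule.span_le.mpr (Bset_sub hr)
    have hone : Submodule.span ℚ {1, aS S} ≤
        Submodule.span ℚ (Bset (k+2) (aS S) (mS S r) (cS S r)) := by
      apply Submodule.span_mono
      rintro x (rfl | rfl)
      · exact (one_a_mem k _ _ _).1
      · exact (one_a_mem k _ _ _).2
    have hker : ∀ z ∈ Inv (insert r S) S, res u r z = 0 → z ∈ Submodule.span ℚ {1, aS S} := by
      intro z hz h0
      obtain ⟨s, t, rfl⟩ := full_inv (vanish huS hr hz h0)
      exact add_mem (Submodule.smul_mem _ _ (Submodule.subset_span (by simp)))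
        (Submodule.smul_mem _ _ (Submodule.subset_span (by simp)))
    have hsp : Submodule.span ℚ (Bset (k+2) (aS S) (mS S r) (cS S r)) = Inv (insert r S) S := by
      apply le_antisymm hle
      intro z hz
      obtain ⟨y, hy, hyz⟩ := hsj (res_Inv hu hr hur hz)
      have : z - y ∈ Submodule.span ℚ {1, aS S} := by
        apply hker _ (sub_mem hz (hle hy))
        rw [map_sub, hyz, sub_self]
      have h2 := add_mem (hone this) hy
      rwa [sub_add_cancel] at h2
    refine ⟨hsp, ?_⟩
    have hfd : FiniteDimensional ℚ (Inv (insert r S) S) := by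
      rw [← hsp]; exact FiniteDimensional.span_of_finite ℚ (Bset_finite _ _ _ _).1
    let f := (res u r).domRestrict (Inv (insert r S) S)
    have hrn := LinearMap.finrank_range_add_finrank_ker f
    have hrange : LinearMap.range f = Inv (insert u S') S' := by
      rw [LinearMap.range_domRestrict]
      apply le_antisymm
      · rintro _ ⟨z, hz, rfl⟩; exact res_Inv hu hr hur hz
      · exact hsj.trans (Submodule.map_mono hle)
    have hk : Submodule.map (Inv (insert r S) S).subtype (LinearMap.ker f) =
        Submodule.span ℚ {1, aS S} := by
      apply le_antisymm
      · rintro _ ⟨z, hz, rfl⟩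
        exact hker _ z.2 (by simpa [f] using hz)
      · intro z hz
        refine ⟨⟨z, hle (hone hz)⟩, ?_, rfl⟩
        have : z ∈ LinearMap.ker (res u r) := by
          refine (Submodule.span_le.mpr ?_) hz
          rintro x (rfl | rfl)
          · exact res_one hur
          · exact res_a hur hr
        simpa [f] using this
    have hk2 : Module.finrank ℚ (LinearMap.ker f) = 2 := by
      rw [← Submodule.finrank_map_subtype_eq, hk]
      apply finrank_pair
      intro s t h
      exact ind_1a huS hvS huv (by rw [h, map_zero])
    rw [hrange, hk2] at hrn
    have ih3 : Module.finrank ℚ (Inv (insert u S') S') = 2 * (k+1) := ih2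
    rw [ih3] at hrn
    omega

end OSaux

namespace OSaux
set_option linter.all false

variable {n : ℕ}

lemma sum_lt (g : Fin n → Fin n → OS n) (hg : ∀ i, g i i = 0) :
    ∑ i, ∑ j, g i j = ∑ p ∈ Finset.univ.filter (fun p : Fin n × Fin n => p.1 < p.2),
      (g p.1 p.2 + g p.2 p.1) := by
  rw [← Finset.sum_product', Finset.univ_product_univ,
    ← Finset.sum_filter_add_sum_filter_not Finset.univ (fun p : Fin n × Fin n => p.1 < p.2),
    Finset.sum_add_distrib]
  congr 1
  rw [← Finset.sum_filter_add_sum_filter_not (Finset.univ.filter (fun p : Fin n × Fin n =>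
    ¬ p.1 < p.2)) (fun p : Fin n × Fin n => p.2 < p.1)]
  rw [Finset.sum_eq_zero (s := Finset.filter (fun p : Fin n × Fin n => ¬ p.2 < p.1) _), add_zero]
  · refine Finset.sum_equiv (Equiv.prodComm _ _) ?_ ?_
    · rintro ⟨i, j⟩
      simp only [Finset.mem_filter, Finset.mem_univ, true_and, Equiv.prodComm_apply, Prod.swap_prod_mk]
      constructor
      · exact fun h => h.2
      · exact fun h => ⟨not_lt.mpr h.le, h⟩
    · rintro ⟨i, j⟩ _; rfl
  · rintro ⟨i, j⟩ h
    simp only [Finset.mem_filter, Finset.mem_univ, true_and, not_lt] at h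
    obtain rfl : i = j := le_antisymm h.2 h.1
    exact hg i

def S0 (n : ℕ) : Finset (Fin (n+1)) := Finset.univ.map Fin.castSuccEmb

lemma S0_card : (S0 n).card = n := by simp [S0]

lemma mem_S0 (i : Fin (n+1)) : i ∈ S0 n ↔ i ≠ Fin.last n := by
  simp only [S0, Finset.mem_map, Finset.mem_univ, true_and, Fin.coe_castSuccEmb]
  exact Fin.exists_castSucc_eq

lemma S0_insert : insert (Fin.last n) (S0 n) = Finset.univ := by
  ext i; simp [mem_S0]; tauto

lemma aOS_eq : aOS n = aS (S0 n) := by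
  simp only [aS, S0, Finset.sum_map, Fin.coe_castSuccEmb]
  rw [sum_lt (fun i j => eOS n i.castSucc j.castSucc) (fun i => e_diag _), aOS, Finset.smul_sum]
  refine Finset.sum_congr rfl fun p _ => ?_
  rw [e_symm p.2.castSucc p.1.castSucc]; module

lemma mOS_eq : mOS n = mS (S0 n) (Fin.last n) := by
  simp only [mS, S0, Finset.sum_map, Fin.coe_castSuccEmb]; rfl

lemma cOS_eq : cOS n = cS (S0 n) (Fin.last n) := by
  simp only [cS, S0, Finset.sum_map, Fin.coe_castSuccEmb]
  rw [sum_lt (fun i j => eOS n i.castSucc j.castSucc * eOS n i.castSucc (Fin.last n))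
    (fun i => by rw [e_diag, zero_mul]), cOS]
  refine Finset.sum_congr rfl fun p _ => ?_
  rw [e_symm p.2.castSucc p.1.castSucc]

lemma OSinv_eq : Subalgebra.toSubmodule (OSinv n) = Inv (insert (Fin.last n) (S0 n)) (S0 n) := by
  have htop : AS (n := n) Finset.univ = ⊤ := by
    rw [← adjoin_top, AS]; simp
  ext z
  rw [mem_Inv, S0_insert, htop]
  constructor
  · intro h
    refine ⟨trivial, fun σ hσ => ?_⟩
    rw [← perm_eq]
    exact h σ (hσ _ (by simp [mem_S0]))
  · rintro ⟨_, h⟩ σ hσ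
    rw [perm_eq]
    refine h σ fun i hi => ?_
    rw [mem_S0, not_not] at hi
    rw [hi, hσ]

theorem final (hn : 2 ≤ n) (B : Set (OS n)) (hB : B = Bset n (aOS n) (mOS n) (cOS n)) :
    B ⊆ (OSinv n : Set (OS n)) ∧
    LinearIndependent ℚ ((↑) : B → OS n) ∧
    Submodule.span ℚ B = Subalgebra.toSubmodule (OSinv n) := by
  rw [aOS_eq, mOS_eq, cOS_eq] at hB
  have hl : Fin.last n ∉ S0 n := by simp [mem_S0]
  obtain ⟨k, hk⟩ : ∃ k, n = k + 1 := ⟨n - 1, by omega⟩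
  have hmain := main_ind k (S0 n) (Fin.last n) hl (by rw [S0_card]; exact hk)
  rw [← hk, ← OSinv_eq, ← hB] at hmain
  obtain ⟨h1, h2⟩ := hmain
  have hfin := Bset_finite n (aS (S0 n)) (mS (S0 n) (Fin.last n)) (cS (S0 n) (Fin.last n))
  rw [← hB] at hfin
  refine ⟨?_, ?_, h1⟩
  · intro x hx
    have : x ∈ Submodule.span ℚ B := Submodule.subset_span hx
    rw [h1] at this
    exact this
  · haveI : Fintype B := hfin.1.fintype
    rw [linearIndependent_iff_card_le_finrank_span, Subtype.range_coe, Set.finrank, h1, h2,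
      ← Nat.card_eq_fintype_card]
    exact hfin.2

end OSaux
/-- For every integer `n ≥ 2`, the set
`B = {aᵉ mᵈ cᵈ : ε, δ ∈ {0,1}, 0 ≤ d < p}` (for `n` even), respectively
`B = {aᵉ mᵈ cᵈ : ε, δ ∈ {0,1}, 0 ≤ d < p−1} ∪ {c^{p−1}, a c^{p−1} + m c^{p−1}}` (for `n` odd),
with `p = ⌊(n+1)/2⌋`, consists of `S_n`-invariant elements and is a basis of `OS_n^{S_n}` as a
`ℚ`-vector space. -/
theorem OSinv_linear_basis (n : ℕ) (hn : 2 ≤ n) (B : Set (OS n))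
    (hB : B = if Even n then
      {x | ∃ ε ∈ ({0,1} : Set ℕ), ∃ δ ∈ ({0,1} : Set ℕ), ∃ d < (n+1)/2,
        x = aOS n ^ ε * mOS n ^ δ * cOS n ^ d}
      else
      {x | ∃ ε ∈ ({0,1} : Set ℕ), ∃ δ ∈ ({0,1} : Set ℕ), ∃ d < (n+1)/2 - 1,
        x = aOS n ^ ε * mOS n ^ δ * cOS n ^ d} ∪
      {cOS n ^ ((n+1)/2 - 1),
        aOS n * cOS n ^ ((n+1)/2 - 1) + mOS n * cOS n ^ ((n+1)/2 - 1)}) :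
    B ⊆ (OSinv n : Set (OS n)) ∧
    LinearIndependent ℚ ((↑) : B → OS n) ∧
    Submodule.span ℚ B = Subalgebra.toSubmodule (OSinv n) := by
  exact OSaux.final hn B hB

end
end

section
/- For every integer n ≥ 3, the elements a·m and c of OS_n are linearly independent over ℚ. -/
noncomputable section

/-- First anticommuting square-zero matrix. -/
def XM : Matrix (Fin 4) (Fin 4) ℚ := !![0,1,0,0; 0,0,0,0; 0,0,0,1; 0,0,0,0]

/-- Second anticommuting square-zero matrix. -/
def YM : Matrix (Fin 4) (Fin 4) ℚ := !![0,0,1,0; 0,0,0,-1; 0,0,0,0; 0,0,0,0]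

lemma XM_mul (p q r s : ℚ) :
    (p • XM + q • YM) * (r • XM + s • YM) = (q * r - p * s) • (YM * XM) := by
  ext i j
  fin_cases i <;> fin_cases j <;>
    simp [XM, YM, Matrix.mul_apply, Fin.sum_univ_four] <;> ring

lemma YXM_entry : (YM * XM) 0 3 = 1 := by
  simp [XM, YM, Matrix.mul_apply, Fin.sum_univ_four]

/-- The algebra map given by two weight functions on pairs. -/
def phiAmb (n : ℕ) (u v : Sym2 (Fin (n+1)) → ℚ) : OSamb n →ₐ[ℚ] Matrix (Fin 4) (Fin 4) ℚ :=
  ExteriorAlgebra.lift ℚ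
    ⟨Finsupp.linearCombination ℚ (fun s : OSidx n => u s.1 • XM + v s.1 • YM), fun m => by
      have h : ∃ p q : ℚ, Finsupp.linearCombination ℚ
          (fun s : OSidx n => u s.1 • XM + v s.1 • YM) m = p • XM + q • YM := by
        refine ⟨m.sum fun s c => c * u s.1, m.sum fun s c => c * v s.1, ?_⟩
        simp only [Finsupp.linearCombination_apply, Finsupp.sum, smul_add, smul_smul,
          Finset.sum_add_distrib, Finset.sum_smul]
      obtain ⟨p, q, h⟩ := h
      rw [h, XM_mul, mul_comm q p, sub_self, zero_smul]⟩

lemma phiAmb_e (n : ℕ) (u v : Sym2 (Fin (n+1)) → ℚ) (i j : Fin (n+1)) (h : i ≠ j) :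
    phiAmb n u v (eAmb n i j h) = u s(i,j) • XM + v s(i,j) • YM := by
  simp [phiAmb, eAmb]

lemma exists_phi (n : ℕ) (u v : Sym2 (Fin (n+1)) → ℚ)
    (hu : ∀ i j, i = j → u s(i,j) = 0) (hv : ∀ i j, i = j → v s(i,j) = 0)
    (H : ∀ i j k, i ≠ j → j ≠ k → i ≠ k →
      (v s(i,k) * u s(j,k) - u s(i,k) * v s(j,k)) - (v s(i,j) * u s(j,k) - u s(i,j) * v s(j,k))
        + (v s(i,j) * u s(i,k) - u s(i,j) * v s(i,k)) = 0) :
    ∃ φ : OS n →ₐ[ℚ] Matrix (Fin 4) (Fin 4) ℚ,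
      ∀ i j, φ (eOS n i j) = u s(i,j) • XM + v s(i,j) • YM := by
  refine ⟨RingQuot.liftAlgHom ℚ ⟨phiAmb n u v, ?_⟩, ?_⟩
  · intro x y h
    cases h with
    | rel i j k hij hjk hik =>
      simp only [map_sub, map_add, map_mul, map_zero, phiAmb_e, XM_mul]
      rw [← sub_smul, ← add_smul, H i j k hij hjk hik, zero_smul]
  · intro i j
    unfold eOS
    split_ifs with h
    · rw [hu i j h, hv i j h]; simp
    · rw [RingQuot.liftAlgHom_mkAlgHom_apply, phiAmb_e]

/-- Functional on `OS` with explicit values on `a·m` and `c`. -/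
lemma exists_functional (n : ℕ) (u v : Sym2 (Fin (n+1)) → ℚ)
    (hu : ∀ i j, i = j → u s(i,j) = 0) (hv : ∀ i j, i = j → v s(i,j) = 0)
    (hul : ∀ i : Fin n, u s(i.castSucc, Fin.last n) = 0)
    (H : ∀ i j k, i ≠ j → j ≠ k → i ≠ k →
      (v s(i,k) * u s(j,k) - u s(i,k) * v s(j,k)) - (v s(i,j) * u s(j,k) - u s(i,j) * v s(j,k))
        + (v s(i,j) * u s(i,k) - u s(i,j) * v s(i,k)) = 0) :
    ∃ l : OS n →ₗ[ℚ] ℚ,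
      l (aOS n * mOS n) = - ((∑ p ∈ Finset.univ.filter (fun p : Fin n × Fin n => p.1 < p.2),
          u s(p.1.castSucc, p.2.castSucc)) * ∑ i : Fin n, v s(i.castSucc, Fin.last n)) ∧
      l (cOS n) = - ∑ p ∈ Finset.univ.filter (fun p : Fin n × Fin n => p.1 < p.2),
          u s(p.1.castSucc, p.2.castSucc) *
            (v s(p.1.castSucc, Fin.last n) + v s(p.2.castSucc, Fin.last n)) := by
  obtain ⟨φ, hφ⟩ := exists_phi n u v hu hv H
  refine ⟨(Matrix.entryLinearMap ℚ ℚ (0 : Fin 4) (3 : Fin 4)).comp φ.toLinearMap, ?_, ?_⟩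
  · simp only [LinearMap.comp_apply, AlgHom.toLinearMap_apply, map_mul, aOS, mOS, map_sum, hφ,
      Finset.sum_add_distrib, ← Finset.sum_smul, XM_mul, hul, Finset.sum_const_zero, map_smul,
      Matrix.entryLinearMap_apply, YXM_entry, smul_eq_mul]
    ring
  · simp only [LinearMap.comp_apply, AlgHom.toLinearMap_apply, map_mul, cOS, map_sum, map_add, hφ,
      XM_mul, hul, map_smul, Matrix.entryLinearMap_apply, YXM_entry, smul_eq_mul]
    rw [← Finset.sum_neg_distrib]
    refine Finset.sum_congr rfl fun p _ => ?_
    ring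

lemma filter_sum_pair (N : ℕ) (f : Fin (N+3) × Fin (N+3) → ℚ) :
    ∑ p ∈ Finset.univ.filter (fun p : Fin (N+3) × Fin (N+3) => p.1 < p.2),
      (if s(p.1.castSucc, p.2.castSucc) = s((0 : Fin (N+3)).castSucc, (1 : Fin (N+3)).castSucc)
        then (1:ℚ) else 0) * f p = f (0, 1) := by
  have h01 : (0 : Fin (N+3)) < 1 := by simp [Fin.lt_def]
  rw [Finset.sum_eq_single (0, 1)]
  · simp
  · rintro ⟨i, j⟩ hp hne
    rw [if_neg, zero_mul]
    intro h
    simp only [Finset.mem_filter, Finset.mem_univ, true_and] at hp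
    dsimp only at h
    rcases Sym2.eq_iff.1 h with ⟨h1, h2⟩ | ⟨h1, h2⟩
    · exact hne (by rw [Fin.castSucc_injective _ h1, Fin.castSucc_injective _ h2])
    · rw [Fin.castSucc_injective _ h1, Fin.castSucc_injective _ h2] at hp
      exact absurd hp (not_lt.2 h01.le)
  · intro h
    exact absurd (by simpa using h01) h

lemma rel_one {α : Type*} [DecidableEq α] (A B C L : α) (hAC : A ≠ C) (hAL : A ≠ L)
    (hBC : B ≠ C) (hBL : B ≠ L) (u v : Sym2 α → ℚ)
    (hu : u = fun s => if s = s(A,B) then 1 else 0)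
    (hv : v = fun s => if s = s(C,L) then 1 else 0) (i j k : α)
    (hij : i ≠ j) (hjk : j ≠ k) (hik : i ≠ k) :
    (v s(i,k) * u s(j,k) - u s(i,k) * v s(j,k)) - (v s(i,j) * u s(j,k) - u s(i,j) * v s(j,k))
        + (v s(i,j) * u s(i,k) - u s(i,j) * v s(i,k)) = 0 := by
  subst hu hv
  simp only [Sym2.eq_iff]
  grind

lemma rel_two {α : Type*} [DecidableEq α] (A B L : α) (hAB : A ≠ B) (hAL : A ≠ L)
    (hBL : B ≠ L) (u v : Sym2 α → ℚ)
    (hu : u = fun s => if s = s(A,B) then 1 else 0)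
    (hv : v = fun s => if s = s(A,L) ∨ s = s(B,L) then 1 else 0) (i j k : α)
    (hij : i ≠ j) (hjk : j ≠ k) (hik : i ≠ k) :
    (v s(i,k) * u s(j,k) - u s(i,k) * v s(j,k)) - (v s(i,j) * u s(j,k) - u s(i,j) * v s(j,k))
        + (v s(i,j) * u s(i,k) - u s(i,j) * v s(i,k)) = 0 := by
  subst hu hv
  simp only [Sym2.eq_iff]
  grind

/-- For every integer `n ≥ 3`, the elements `a·m` and `c` of `OS_n` are
linearly independent over `ℚ`. -/
theorem am_c_linearIndependent (n : ℕ) (hn : 3 ≤ n) :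
    LinearIndependent ℚ ![aOS n * mOS n, cOS n] := by
  obtain ⟨N, rfl⟩ : ∃ N, n = N + 3 := ⟨n - 3, by omega⟩
  have h01 : (0 : Fin (N+3)) ≠ 1 := by simp [Fin.ext_iff]
  have h02 : (0 : Fin (N+3)) ≠ 2 := by simp [Fin.ext_iff, Nat.mod_eq_of_lt]
  have h12 : (1 : Fin (N+3)) ≠ 2 := by simp [Fin.ext_iff, Nat.mod_eq_of_lt]
  have c01 := (Fin.castSucc_injective _).ne h01
  have c02 := (Fin.castSucc_injective _).ne h02
  have c12 := (Fin.castSucc_injective _).ne h12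
  have cl : ∀ i : Fin (N+3), i.castSucc ≠ Fin.last (N+3) := fun i => Fin.castSucc_ne_last i
  have fs := filter_sum_pair N
  have fs1 := filter_sum_pair N (fun _ => 1)
  simp only [mul_one] at fs1
  have ul : ∀ i : Fin (N+3), (if s(i.castSucc, Fin.last (N+3)) =
      s((0 : Fin (N+3)).castSucc, (1 : Fin (N+3)).castSucc) then (1:ℚ) else 0) = 0 := by
    intro i
    rw [if_neg]
    rw [Sym2.eq_iff]
    rintro (⟨_, h⟩ | ⟨_, h⟩)
    · exact cl _ h.symm
    · exact cl _ h.symm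
  have hdiag : ∀ A B i j : Fin (N+4), A ≠ B → i = j → s(i,j) ≠ s(A,B) := by
    intro A B i j hAB hij h
    rw [Sym2.eq_iff] at h
    grind
  obtain ⟨l1, l1a, l1c⟩ := exists_functional (N+3)
    (fun s => if s = s((0 : Fin (N+3)).castSucc, (1 : Fin (N+3)).castSucc) then 1 else 0)
    (fun s => if s = s((2 : Fin (N+3)).castSucc, Fin.last (N+3)) then 1 else 0)
    (fun i j h => if_neg (hdiag _ _ i j c01 h)) (fun i j h => if_neg (hdiag _ _ i j (cl 2) h)) ul
    (rel_one _ _ _ _ c02 (cl 0) c12 (cl 1) _ _ rfl rfl)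
  obtain ⟨l2, l2a, l2c⟩ := exists_functional (N+3)
    (fun s => if s = s((0 : Fin (N+3)).castSucc, (1 : Fin (N+3)).castSucc) then 1 else 0)
    (fun s => if s = s((0 : Fin (N+3)).castSucc, Fin.last (N+3)) ∨
      s = s((1 : Fin (N+3)).castSucc, Fin.last (N+3)) then 1 else 0)
    (fun i j h => if_neg (hdiag _ _ i j c01 h))
    (fun i j h => if_neg (not_or.2 ⟨hdiag _ _ i j (cl 0) h, hdiag _ _ i j (cl 1) h⟩)) ul
    (rel_two _ _ _ c01 (cl 0) (cl 1) _ _ rfl rfl)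
  have e : ∀ i k : Fin (N+3), s(i.castSucc, Fin.last (N+3)) = s(k.castSucc, Fin.last (N+3)) ↔
      i = k := by
    intro i k
    rw [Sym2.congr_left]
    exact (Fin.castSucc_injective _).eq_iff
  simp only [e] at l1a l1c l2a l2c
  rw [fs1] at l1a
  rw [fs (fun p => (if p.1 = 2 then (1:ℚ) else 0) + if p.2 = 2 then 1 else 0)] at l1c
  rw [fs (fun p => (if p.1 = 0 ∨ p.1 = 1 then (1:ℚ) else 0) +
    if p.2 = 0 ∨ p.2 = 1 then 1 else 0)] at l2c
  simp only [if_neg h02, if_neg h12, Finset.sum_ite_eq', Finset.mem_univ, if_true] at l1a l1c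
  simp only [true_or, or_true, if_true] at l2c
  rw [LinearIndependent.pair_iff]
  intro r t h
  have k1 := congrArg l1 h
  have k2 := congrArg l2 h
  simp only [map_add, map_smul, map_zero, l1a, l1c, l2c, smul_eq_mul] at k1 k2
  have hr : r = 0 := by linarith
  subst hr
  exact ⟨rfl, by linarith⟩

end
end

section
/- For every integer n ≥ 2, the elements a, m, and g lie in OS_n^{S_n}, and the smallest ℚ-subalgebra of OS_n containing a, m, and g equals OS_n^{S_n}; that is, every S_n-invariant element of OS_n is a ℚ-polynomial expression in a, m, and g. -/
noncomputable section

section OSAbstract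

set_option linter.unusedSectionVars false

variable {ι A : Type*} [DecidableEq ι] [Ring A] [Algebra ℚ A]

/-- Abstract form of the relations between the generators. -/
structure OSax (e : ι → ι → A) : Prop where
  symm : ∀ i j, e i j = e j i
  diag : ∀ i, e i i = 0
  anti : ∀ i j k l, e i j * e k l = -(e k l * e i j)
  sq : ∀ i j, e i j * e i j = 0
  rel : ∀ r a b, e r a * e r b = e r a * e a b - e r b * e a b

/-- The monomial of a path starting at a root. -/
def pth (e : ι → ι → A) : ι → List ι → A
  | _, [] => 1
  | r, a :: u => e r a * pth e a u

/-- Span of all path monomials with given root and vertex list, up to reordering. -/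
def Tsp (e : ι → ι → A) (r : ι) (u : List ι) : Submodule ℚ A :=
  Submodule.span ℚ {x | ∃ w : List ι, w.Perm u ∧ x = pth e r w}

variable {e : ι → ι → A}

lemma pth_comm (he : OSax e) (i j r : ι) (u : List ι) :
    pth e r u * e i j = ((-1 : ℚ) ^ u.length) • (e i j * pth e r u) := by
  induction u generalizing r with
  | nil => simp [pth]
  | cons a u ih =>
    rw [pth, mul_assoc, ih, mul_smul_comm, ← mul_assoc, he.anti r a i j, List.length_cons,
      pow_succ]
    simp [mul_assoc]

lemma pth_comm' (he : OSax e) (i j r : ι) (u : List ι) :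
    e i j * pth e r u = ((-1 : ℚ) ^ u.length) • (pth e r u * e i j) := by
  rw [pth_comm he, smul_smul, ← mul_pow]; simp

lemma pth_mul_cons (he : OSax e) (r a b : ι) (u v : List ι) :
    pth e r (a :: u) * pth e r (b :: v) = e r a * (pth e a u * pth e a (b :: v))
      + ((-1 : ℚ) ^ (u.length + 1)) • (e r b * (pth e b (a :: u) * pth e b v)) := by
  simp only [pth]
  have h1 := pth_comm he r b a u
  have h2 := pth_comm he a b a u
  calc e r a * pth e a u * (e r b * pth e b v)
      = e r a * (pth e a u * e r b) * pth e b v := by simp only [mul_assoc]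
    _ = ((-1 : ℚ) ^ u.length) • ((e r a * e r b) * (pth e a u * pth e b v)) := by
        rw [h1]; simp only [mul_smul_comm, smul_mul_assoc, mul_assoc]
    _ = e r a * ((pth e a u * e a b) * pth e b v) + ((-1 : ℚ) ^ (u.length + 1)) •
          (e r b * (e b a * pth e a u * pth e b v)) := by
        rw [h2, he.rel, he.symm b a, pow_succ]
        simp only [mul_smul_comm, smul_mul_assoc, mul_assoc, sub_mul, smul_sub, mul_neg, mul_one,
          neg_smul]
        rw [sub_eq_add_neg]
    _ = _ := by simp only [mul_assoc]

lemma Tsp_self (r : ι) (u : List ι) : pth e r u ∈ Tsp e r u :=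
  Submodule.subset_span ⟨u, List.Perm.refl _, rfl⟩

lemma Tsp_perm {r : ι} {u v : List ι} (h : u.Perm v) : Tsp e r u ≤ Tsp e r v := by
  apply Submodule.span_mono
  rintro x ⟨w, hw, rfl⟩
  exact ⟨w, hw.trans h, rfl⟩

lemma Tsp_cons {r a : ι} {u : List ι} {x : A} (hx : x ∈ Tsp e a u) :
    e r a * x ∈ Tsp e r (a :: u) := by
  induction hx using Submodule.span_induction with
  | mem x h =>
    obtain ⟨w, hw, rfl⟩ := h
    exact Submodule.subset_span ⟨a :: w, hw.cons a, rfl⟩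
  | zero => simp
  | add x y _ _ hx hy => rw [mul_add]; exact add_mem hx hy
  | smul c x _ hx => rw [mul_smul_comm]; exact Submodule.smul_mem _ _ hx

lemma pth_mul_mem (he : OSax e) (N : ℕ) : ∀ (r : ι) (u v : List ι), u.length + v.length = N →
    pth e r u * pth e r v ∈ Tsp e r (u ++ v) := by
  induction N with
  | zero =>
    intro r u v h
    have hu : u = [] := List.length_eq_zero_iff.mp (by omega)
    have hv : v = [] := List.length_eq_zero_iff.mp (by omega)
    subst hu hv
    simpa [pth] using Tsp_self (e := e) r []
  | succ N ih =>
    intro r u v h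
    match u, v with
    | [], v => simpa [pth] using Tsp_self (e := e) r v
    | u, [] => simpa [pth] using Tsp_self (e := e) r u
    | a :: u, b :: v =>
      rw [pth_mul_cons he]
      simp only [List.length_cons] at h
      refine add_mem ?_ (Submodule.smul_mem _ _ ?_)
      · exact Tsp_cons (ih a u (b :: v) (by simp; omega))
      · refine Tsp_perm ?_ (Tsp_cons (ih b (a :: u) v (by simp; omega)))
        exact (List.perm_middle (a := b) (l₁ := a :: u) (l₂ := v)).symm

lemma Tsp_mul (he : OSax e) {r : ι} {u v : List ι} {x y : A} (hx : x ∈ Tsp e r u)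
    (hy : y ∈ Tsp e r v) : x * y ∈ Tsp e r (u ++ v) := by
  have h : Tsp e r u * Tsp e r v ≤ Tsp e r (u ++ v) := by
    rw [Tsp, Tsp, Submodule.span_mul_span, Submodule.span_le]
    rintro _ ⟨_, ⟨w, hw, rfl⟩, _, ⟨w', hw', rfl⟩, rfl⟩
    exact Tsp_perm (hw.append hw') (pth_mul_mem he _ r w w' rfl)
  exact h (Submodule.mul_mem_mul hx hy)

lemma pth_append (r s : ι) (u v : List ι) :
    pth e r (u ++ s :: v) = pth e r (u ++ [s]) * pth e s v := by
  induction u generalizing r with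
  | nil => simp [pth]
  | cons a u ih => simp only [List.cons_append, pth]; rw [ih, mul_assoc]

lemma pth_rev (he : OSax e) (r s : ι) (u : List ι) :
    ∃ c : ℚ, pth e r (u ++ [s]) = c • pth e s (u.reverse ++ [r]) := by
  induction u generalizing r with
  | nil => exact ⟨1, by simp [pth, he.symm r s]⟩
  | cons a u ih =>
    obtain ⟨c, hc⟩ := ih a
    refine ⟨c * (-1) ^ (u.reverse ++ [a]).length, ?_⟩
    have h : pth e s (u.reverse ++ [a, r]) = pth e s (u.reverse ++ [a]) * e a r := by
      rw [pth_append s a u.reverse [r]]; simp [pth]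
    rw [List.cons_append, pth, hc, mul_smul_comm, pth_comm' he, smul_smul, List.reverse_cons,
      List.append_assoc, List.singleton_append, h, he.symm r a]

lemma pth_reroot (he : OSax e) {r s : ι} {u v : List ι} (h : (r :: u).Perm (s :: v)) :
    pth e r u ∈ Tsp e s v := by
  by_cases hrs : r = s
  · subst hrs
    exact Submodule.subset_span ⟨u, (List.perm_cons r).1 h, rfl⟩
  · have hs : s ∈ u := by
      have : s ∈ r :: u := h.symm.subset (by simp)
      rcases List.mem_cons.1 this with h | h
      · exact absurd h.symm hrs
      · exact h
    obtain ⟨u1, u2, rfl⟩ := List.append_of_mem hs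
    obtain ⟨c, hc⟩ := pth_rev he r s u1
    rw [pth_append, hc, smul_mul_assoc]
    refine Submodule.smul_mem _ _ (Tsp_perm ?_ (pth_mul_mem he _ s (u1.reverse ++ [r]) u2 rfl))
    rw [← List.perm_cons s]
    refine List.Perm.trans ?_ h
    rw [List.perm_iff_count]
    intro x
    simp only [List.count_cons, List.count_append, List.count_reverse, List.count_nil]
    omega

lemma Tsp_reroot (he : OSax e) {r s : ι} {u v : List ι} (h : (r :: u).Perm (s :: v)) :
    Tsp e r u ≤ Tsp e s v := by
  rw [Tsp, Submodule.span_le]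
  rintro _ ⟨w, hw, rfl⟩
  exact pth_reroot he ((hw.cons r).trans h)

lemma e_mul_pth_root (he : OSax e) (i j : ι) (w : List ι) (hj : j ∈ w) :
    e i j * pth e i w = 0 := by
  induction w generalizing i with
  | nil => simp at hj
  | cons a w ih =>
    rw [pth, ← mul_assoc]
    by_cases h : j = a
    · subst h; rw [he.sq, zero_mul]
    · have hjw : j ∈ w := by simpa [h] using hj
      rw [he.rel, he.symm j a, ← sub_mul, mul_assoc, ih a hjw, mul_zero]

lemma e_mul_Tsp_root (he : OSax e) {i j : ι} {w : List ι} (hj : j ∈ w) {x : A}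
    (hx : x ∈ Tsp e i w) : e i j * x = 0 := by
  induction hx using Submodule.span_induction with
  | mem x h =>
    obtain ⟨w', hw, rfl⟩ := h
    exact e_mul_pth_root he i j w' (hw.symm.subset hj)
  | zero => simp
  | add x y _ _ hx hy => rw [mul_add, hx, hy, add_zero]
  | smul c x _ hx => rw [mul_smul_comm, hx, smul_zero]

lemma exists_reroot {r i : ι} {u : List ι} (hi : i ∈ r :: u) :
    ∃ w, (r :: u).Perm (i :: w) :=
  ⟨(r :: u).erase i, List.perm_cons_erase hi⟩

lemma e_mul_pth_in (he : OSax e) {i j r : ι} {u : List ι} (hi : i ∈ r :: u) (hj : j ∈ r :: u) :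
    e i j * pth e r u = 0 := by
  obtain ⟨w, hw⟩ := exists_reroot hi
  by_cases hij : i = j
  · subst hij; rw [he.diag, zero_mul]
  · refine e_mul_Tsp_root he ?_ (pth_reroot he hw)
    have := hw.subset hj
    rcases List.mem_cons.1 this with h | h
    · exact absurd h.symm hij
    · exact h

/-- Joining two paths by an edge. -/
lemma e_mul_pth_join (he : OSax e) {i j r : ι} {u v : List ι} (hi : i ∈ r :: u) :
    e i j * (pth e r u * pth e j v) ∈ Tsp e r (u ++ j :: v) := by
  obtain ⟨w, hw⟩ := exists_reroot hi
  rw [← mul_assoc, pth_comm' he, smul_mul_assoc, mul_assoc]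
  refine Submodule.smul_mem _ _ ?_
  have h1 : e i j * pth e j v = pth e i (j :: v) := rfl
  rw [h1]
  have h2 := Tsp_mul he (pth_reroot he hw) (Tsp_self (e := e) i (j :: v))
  refine Tsp_reroot he ?_ h2
  have := hw.symm.append_right (j :: v)
  simpa using this

/-! ### Permutations -/

lemma exists_perm_map [Fintype ι] {u v : List ι} (hu : u.Nodup) (hv : v.Nodup)
    (h : u.length = v.length) : ∃ σ : Equiv.Perm ι, u.map σ = v := by
  let e1 : {x // x ∈ u} ≃ {x // x ∈ v} :=
    (hu.getEquiv u).symm.trans ((finCongr h).trans (hv.getEquiv v))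
  refine ⟨e1.extendSubtype, ?_⟩
  apply List.ext_getElem
  · simpa using h
  · intro k h1 h2
    rw [List.getElem_map]
    have hk : k < u.length := by simpa using h1
    rw [Equiv.extendSubtype_apply_of_mem e1 _ (List.getElem_mem hk)]
    have : (hu.getEquiv u).symm ⟨u[k], List.getElem_mem hk⟩ = ⟨k, hk⟩ := by
      rw [Equiv.symm_apply_eq]; rfl
    simp only [e1, Equiv.trans_apply, this]
    rfl

/-- A permutation carrying one list to another and fixing a third one pointwise. -/
lemma exists_perm_map_fix [Fintype ι] {u v w : List ι} (hu : (w ++ u).Nodup)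
    (hv : (w ++ v).Nodup) (h : u.length = v.length) :
    ∃ σ : Equiv.Perm ι, u.map σ = v ∧ ∀ i ∈ w, σ i = i := by
  obtain ⟨σ, hσ⟩ := exists_perm_map hu hv (by simp [h])
  rw [List.map_append] at hσ
  obtain ⟨h1, h2⟩ := List.append_inj hσ (by simp)
  refine ⟨σ, h2, fun i hi => ?_⟩
  have h3 : w.map σ = w.map id := by simpa using h1
  exact List.map_inj_left.1 h3 i hi

/-- If two lists are permutations of one another, the permutation may be supported there. -/
lemma exists_perm_supp [Fintype ι] {u v : List ι} (hu : u.Nodup) (h : u.Perm v) :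
    ∃ σ : Equiv.Perm ι, u.map σ = v ∧ ∀ i, i ∉ u → σ i = i := by
  have hw : ∀ w : List ι, w.Nodup → w.Perm u →
      ((Finset.univ \ u.toFinset).toList ++ w).Nodup := by
    intro w hw hwu
    rw [List.nodup_append']
    refine ⟨Finset.nodup_toList _, hw, ?_⟩
    intro x hx hx'
    simp only [Finset.mem_toList, Finset.mem_sdiff, Finset.mem_univ, List.mem_toFinset,
      true_and] at hx
    exact hx (hwu.subset hx')
  obtain ⟨σ, h1, h2⟩ := exists_perm_map_fix (hw u hu (List.Perm.refl _))
    (hw v (h.nodup hu) h.symm) h.length_eq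
  exact ⟨σ, h1, fun i hi => h2 i (by simpa using hi)⟩

/-- Binomial coefficients at `q = -1`. -/
def bet : ℕ → ℕ → ℚ
  | 0, _ => 1
  | _ + 1, 0 => 1
  | s + 1, t + 1 => bet s (t + 1) + (-1) ^ (s + 1) * bet (s + 1) t

lemma bet_one_even (t : ℕ) : bet 1 (2 * t) = 1 ∧ bet 1 (2 * t + 1) = 0 := by
  induction t with
  | zero => simp [bet]
  | succ t ih =>
    have h1 : bet 1 (2 * (t + 1)) = 1 := by
      rw [show 2 * (t + 1) = (2 * t + 1) + 1 by ring, bet, ih.2]; simp [bet]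
    refine ⟨h1, ?_⟩
    rw [bet, h1]; simp [bet]

lemma bet_one_nonneg (t : ℕ) : 0 ≤ bet 1 t := by
  rcases Nat.even_or_odd' t with ⟨k, rfl | rfl⟩
  · rw [(bet_one_even k).1]; norm_num
  · rw [(bet_one_even k).2]

lemma bet_two (t : ℕ) : 1 ≤ bet 2 t := by
  induction t with
  | zero => simp [bet]
  | succ t ih =>
    have := bet_one_nonneg (t + 1)
    rw [bet]; norm_num; linarith

variable {ρ : Equiv.Perm ι → A →ₐ[ℚ] A}

lemma rho_pth (hρ : ∀ σ i j, ρ σ (e i j) = e (σ i) (σ j)) (σ : Equiv.Perm ι) (r : ι)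
    (u : List ι) : ρ σ (pth e r u) = pth e (σ r) (u.map σ) := by
  induction u generalizing r with
  | nil => simp [pth]
  | cons a u ih => simp [pth, ih, hρ]

lemma Phi_perm [Fintype ι] (hρ : ∀ σ i j, ρ σ (e i j) = e (σ i) (σ j)) (Φ : A →ₗ[ℚ] A)
    {r s : ι} {u v : List ι} (h : (r :: u).Perm (s :: v)) (hu : (r :: u).Nodup)
    (hΦ : ∀ σ : Equiv.Perm ι, (∀ i, i ∉ r :: u → σ i = i) → ∀ y, Φ (ρ σ y) = Φ y) :
    Φ (pth e r u) = Φ (pth e s v) := by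
  obtain ⟨σ, h1, h2⟩ := exists_perm_supp hu h
  simp only [List.map_cons, List.cons.injEq] at h1
  rw [← hΦ σ h2, rho_pth hρ, h1.1, h1.2]

lemma Phi_perm' [Fintype ι] (hρ : ∀ σ i j, ρ σ (e i j) = e (σ i) (σ j)) (Φ : A →ₗ[ℚ] A)
    {r : ι} {u v : List ι} (h : u.Perm v) (hu : u.Nodup) (hr : r ∉ u)
    (hΦ : ∀ σ : Equiv.Perm ι, (∀ i, i ∉ u → σ i = i) → ∀ y, Φ (ρ σ y) = Φ y) :
    Φ (pth e r u) = Φ (pth e r v) := by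
  obtain ⟨σ, h1, h2⟩ := exists_perm_supp hu h
  rw [← hΦ σ h2, rho_pth hρ, h1, h2 r hr]

lemma Phi_mul [Fintype ι] (he : OSax e) (hρ : ∀ σ i j, ρ σ (e i j) = e (σ i) (σ j)) (N : ℕ) :
    ∀ (Φ : A →ₗ[ℚ] A) (r : ι) (u v : List ι), u.length + v.length = N → (u ++ v).Nodup →
    r ∉ u ++ v →
    (∀ σ : Equiv.Perm ι, (∀ i, i ∉ u ++ v → σ i = i) → ∀ y, Φ (ρ σ y) = Φ y) →
    Φ (pth e r u * pth e r v) = bet u.length v.length • Φ (pth e r (u ++ v)) := by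
  induction N with
  | zero =>
    intro Φ r u v h _ _ _
    have hu : u = [] := List.length_eq_zero_iff.mp (by omega)
    have hv : v = [] := List.length_eq_zero_iff.mp (by omega)
    subst hu hv
    simp [pth, bet]
  | succ N ih =>
    intro Φ r u v h hnd hr hΦ
    match u, v with
    | [], v => simp [pth, bet]
    | a :: u, [] => simp [pth, bet]
    | a :: u, b :: v =>
      simp only [List.length_cons] at h
      have hp : (b :: (a :: u ++ v)).Perm (a :: u ++ b :: v) :=
        (List.perm_middle (a := b) (l₁ := a :: u) (l₂ := v)).symm
      have hnd2 := hp.symm.nodup hnd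
      have key : ∀ (c : ι) (p q : List ι), (c :: (p ++ q)).Perm (a :: u ++ b :: v) →
          p.length + q.length = N →
          Φ (e r c * (pth e c p * pth e c q)) =
            bet p.length q.length • Φ (pth e r (a :: u ++ b :: v)) := by
        intro c p q hc hN
        have hndc := hc.symm.nodup hnd
        have hrc : r ∉ c :: (p ++ q) := fun hh => hr (hc.subset hh)
        have h1 := ih (Φ ∘ₗ LinearMap.mulLeft ℚ (e r c)) c p q hN (List.nodup_cons.1 hndc).2
          (List.nodup_cons.1 hndc).1 ?_
        · simp only [LinearMap.comp_apply, LinearMap.mulLeft_apply] at h1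
          rw [h1]
          congr 1
          refine Phi_perm' (u := c :: (p ++ q)) hρ Φ hc hndc hrc ?_
          intro σ hσ y
          exact hΦ σ (fun i hi => hσ i (fun hh => hi (hc.subset hh))) y
        · intro σ hσ y
          simp only [LinearMap.comp_apply, LinearMap.mulLeft_apply]
          rw [← hΦ σ ?_ (e r c * y), map_mul (ρ σ), hρ, hσ c (List.nodup_cons.1 hndc).1, hσ r ?_]
          · intro hh; exact hrc (List.mem_cons_of_mem _ hh)
          · intro i hi
            exact hσ i (fun hh => hi (hc.subset (List.mem_cons_of_mem _ hh)))
      rw [pth_mul_cons he, map_add, map_smul, key a u (b :: v) (by simp) (by simp; omega),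
        key b (a :: u) v hp (by simp; omega), smul_smul, ← add_smul]
      simp [bet]

/-- Symmetrization kills paths with at least three vertices. -/
lemma Phi_zero [Fintype ι] (he : OSax e) (hρ : ∀ σ i j, ρ σ (e i j) = e (σ i) (σ j))
    (Φ : A →ₗ[ℚ] A) {r a b : ι} {v : List ι} (hnd : (r :: a :: b :: v).Nodup)
    (hΦ : ∀ σ : Equiv.Perm ι, (∀ i, i ∉ r :: a :: b :: v → σ i = i) → ∀ y, Φ (ρ σ y) = Φ y) :
    Φ (pth e r (a :: b :: v)) = 0 := by
  have h1 := Phi_mul he hρ _ Φ r [a, b] v rfl (by simpa using (List.nodup_cons.1 hnd).2)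
    (by simpa using (List.nodup_cons.1 hnd).1)
    (fun σ hσ y => hΦ σ (fun i hi => hσ i (fun hh => hi (List.mem_cons_of_mem _ (by simpa using hh)))) y)
  have h2 : pth e r [a, b] * pth e r v = - pth e b (a :: r :: v) := by
    simp only [pth, mul_one]
    rw [he.anti r a a b, he.symm a b, he.symm r a]
    simp [mul_assoc]
  have hp : (r :: a :: b :: v).Perm (b :: a :: r :: v) := by
    rw [List.perm_iff_count]
    intro x
    simp only [List.count_cons]
    omega
  have h3 := Phi_perm hρ Φ hp hnd hΦ
  rw [h2, map_neg, ← h3] at h1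
  simp only [List.cons_append, List.nil_append] at h1
  have h4 : (bet 2 v.length + 1) • Φ (pth e r (a :: b :: v)) = 0 := by
    rw [add_smul, one_smul]
    have : bet 2 v.length • Φ (pth e r (a :: b :: v)) = - Φ (pth e r (a :: b :: v)) := h1.symm
    rw [this]; simp
  have := bet_two v.length
  rcases smul_eq_zero.1 h4 with h | h
  · linarith
  · exact h

/-! ### Decomposition -/

/-- The subalgebra generated by the edges inside `S`. -/
def Esub (e : ι → ι → A) (S : Finset ι) : Subalgebra ℚ A :=
  Algebra.adjoin ℚ {x | ∃ i ∈ S, ∃ j ∈ S, x = e i j}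

/-- Span of products of a path rooted at `r` and an element on the complementary vertices. -/
def Dsp (e : ι → ι → A) (r : ι) (S : Finset ι) : Submodule ℚ A :=
  Submodule.span ℚ {x | ∃ (u : List ι) (y : A), (r :: u).Nodup ∧ (∀ i ∈ u, i ∈ S) ∧
    y ∈ Esub e (S \ (r :: u).toFinset) ∧ x = pth e r u * y}

lemma Esub_e {S : Finset ι} {i j : ι} (hi : i ∈ S) (hj : j ∈ S) : e i j ∈ Esub e S :=
  Algebra.subset_adjoin ⟨i, hi, j, hj, rfl⟩

lemma Dsp_of_Tsp {r : ι} {S : Finset ι} {u : List ι} {x y : A} (hx : x ∈ Tsp e r u)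
    (hu : (r :: u).Nodup) (huS : ∀ i ∈ u, i ∈ S) (hy : y ∈ Esub e (S \ (r :: u).toFinset)) :
    x * y ∈ Dsp e r S := by
  induction hx using Submodule.span_induction with
  | mem x h =>
    obtain ⟨w, hw, rfl⟩ := h
    refine Submodule.subset_span ⟨w, y, (hw.cons r).symm.nodup hu, fun i hi =>
      huS i (hw.subset hi), ?_, rfl⟩
    rwa [List.toFinset_eq_of_perm _ _ (hw.cons r)]
  | zero => simp
  | add x y _ _ hx hy => rw [add_mul]; exact add_mem hx hy
  | smul c x _ hx => rw [smul_mul_assoc]; exact Submodule.smul_mem _ _ hx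

lemma Esub_le_Dsp (he : OSax e) (N : ℕ) : ∀ (S : Finset ι) (r : ι), S.card = N → r ∈ S →
    ∀ x ∈ Esub e S, x ∈ Dsp e r S := by
  induction N using Nat.strong_induction_on with
  | _ N IH =>
  intro S r hN hr x hx
  -- the join case
  have join : ∀ (i j : ι) (u : List ι) (y : A), (r :: u).Nodup → (∀ i ∈ u, i ∈ S) →
      y ∈ Esub e (S \ (r :: u).toFinset) → i ∈ r :: u → j ∈ S → j ∉ r :: u →
      e i j * (pth e r u * y) ∈ Dsp e r S := by
    intro i j u y hu huS hy hi hj hju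
    have hjS : j ∈ S \ (r :: u).toFinset := by
      simp only [Finset.mem_sdiff, List.mem_toFinset]; exact ⟨hj, hju⟩
    have hlt : (S \ (r :: u).toFinset).card < N := by
      rw [← hN]
      apply Finset.card_lt_card
      refine ⟨Finset.sdiff_subset, fun hh => ?_⟩
      have := hh hr
      simp at this
    have hy' := IH _ hlt _ j rfl hjS y hy
    clear hy
    induction hy' using Submodule.span_induction with
    | mem y h =>
      obtain ⟨v, z, hv, hvS, hz, rfl⟩ := h
      have h1 := e_mul_pth_join (e := e) he (j := j) (v := v) hi
      have h2 : e i j * (pth e r u * (pth e j v * z))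
          = e i j * (pth e r u * pth e j v) * z := by simp only [mul_assoc]
      rw [h2]
      refine Dsp_of_Tsp h1 ?_ ?_ ?_
      · rw [← List.cons_append, List.nodup_append']
        refine ⟨hu, hv, ?_⟩
        intro x hx hx'
        rcases List.mem_cons.1 hx' with rfl | hx'
        · exact hju hx
        · have := hvS x hx'
          simp only [Finset.mem_sdiff, List.mem_toFinset] at this
          exact this.2 hx
      · intro x hx
        rcases List.mem_append.1 hx with hx | hx
        · exact huS x hx
        · rcases List.mem_cons.1 hx with rfl | hx
          · exact hj
          · exact (Finset.mem_sdiff.1 (hvS x hx)).1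
      · have : S \ (r :: (u ++ j :: v)).toFinset
            = (S \ (r :: u).toFinset) \ (j :: v).toFinset := by
          ext x
          simp only [Finset.mem_sdiff, List.mem_toFinset, List.mem_cons, List.mem_append]
          tauto
        rwa [this]
    | zero => simp
    | add x y _ _ hx hy => rw [mul_add, mul_add]; exact add_mem hx hy
    | smul c x _ hx => rw [mul_smul_comm, mul_smul_comm]; exact Submodule.smul_mem _ _ hx
  have main : ∀ i ∈ S, ∀ j ∈ S, ∀ d ∈ Dsp e r S, e i j * d ∈ Dsp e r S := by
    intro i hi j hj d hd
    induction hd using Submodule.span_induction with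
    | mem d h =>
      obtain ⟨u, y, hu, huS, hy, rfl⟩ := h
      by_cases h1 : i ∈ r :: u
      · by_cases h2 : j ∈ r :: u
        · rw [← mul_assoc, e_mul_pth_in he h1 h2, zero_mul]; exact zero_mem _
        · exact join i j u y hu huS hy h1 hj h2
      · by_cases h2 : j ∈ r :: u
        · rw [he.symm]; exact join j i u y hu huS hy h2 hi h1
        · rw [← mul_assoc, pth_comm' he, smul_mul_assoc, mul_assoc]
          refine Submodule.smul_mem _ _ (Submodule.subset_span ⟨u, _, hu, huS, ?_, rfl⟩)
          refine mul_mem (Esub_e ?_ ?_) hy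
          · rw [Finset.mem_sdiff, List.mem_toFinset]; exact ⟨hi, h1⟩
          · rw [Finset.mem_sdiff, List.mem_toFinset]; exact ⟨hj, h2⟩
    | zero => simp
    | add x y _ _ hx hy => rw [mul_add]; exact add_mem hx hy
    | smul c x _ hx => rw [mul_smul_comm]; exact Submodule.smul_mem _ _ hx
  have all : ∀ x ∈ Esub e S, ∀ d ∈ Dsp e r S, x * d ∈ Dsp e r S := by
    intro x hx
    induction hx using Algebra.adjoin_induction with
    | mem x h =>
      obtain ⟨i, hi, j, hj, rfl⟩ := h
      exact main i hi j hj
    | algebraMap c =>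
      intro d hd
      rw [← Algebra.smul_def]; exact Submodule.smul_mem _ _ hd
    | add x y _ _ hx hy => intro d hd; rw [add_mul]; exact add_mem (hx d hd) (hy d hd)
    | mul x y _ _ hx hy => intro d hd; rw [mul_assoc]; exact hx _ (hy d hd)
  have h1 : (1 : A) ∈ Dsp e r S :=
    Submodule.subset_span ⟨[], 1, by simp, by simp, one_mem _, by simp [pth]⟩
  simpa using all x hx 1 h1

lemma Esub_fix (hρ : ∀ σ i j, ρ σ (e i j) = e (σ i) (σ j)) {S : Finset ι} {σ : Equiv.Perm ι}
    (hσ : ∀ i ∈ S, σ i = i) {x : A} (hx : x ∈ Esub e S) : ρ σ x = x := by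
  induction hx using Algebra.adjoin_induction with
  | mem x h =>
    obtain ⟨i, hi, j, hj, rfl⟩ := h
    rw [hρ, hσ i hi, hσ j hj]
  | algebraMap c => simp
  | add x y _ _ hx hy => rw [map_add, hx, hy]
  | mul x y _ _ hx hy => rw [map_mul, hx, hy]

lemma Phi_Esub [Fintype ι] (he : OSax e) (hρ : ∀ σ i j, ρ σ (e i j) = e (σ i) (σ j)) (N : ℕ) :
    ∀ (Φ : A →ₗ[ℚ] A) (S : Finset ι), S.card = N →
    (∀ σ : Equiv.Perm ι, (∀ i, i ∉ S → σ i = i) → ∀ y, Φ (ρ σ y) = Φ y) →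
    ∀ y ∈ Esub e S,
      Φ y ∈ Submodule.span ℚ ({Φ 1} ∪ {x | ∃ p ∈ S, ∃ q ∈ S, p ≠ q ∧ x = Φ (e p q)}) := by
  induction N using Nat.strong_induction_on with
  | _ N IH =>
  intro Φ S hN hΦ y hy
  rcases S.eq_empty_or_nonempty with rfl | ⟨r, hr⟩
  · have : y ∈ (⊥ : Subalgebra ℚ A) := by
      rw [← Algebra.adjoin_empty]
      convert hy using 1
      simp [Esub]
    obtain ⟨c, rfl⟩ := Algebra.mem_bot.1 this
    rw [Algebra.algebraMap_eq_smul_one, map_smul]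
    exact Submodule.smul_mem _ _ (Submodule.subset_span (Or.inl rfl))
  · have hyD := Esub_le_Dsp he _ S r rfl hr y hy
    clear hy
    induction hyD using Submodule.span_induction with
    | zero => simp
    | add x y _ _ hx hy => rw [map_add]; exact add_mem hx hy
    | smul c x _ hx => rw [map_smul]; exact Submodule.smul_mem _ _ hx
    | mem y h =>
      obtain ⟨u, z, hu, huS, hz, rfl⟩ := h
      have hlt : (S \ (r :: u).toFinset).card < N := by
        rw [← hN]
        apply Finset.card_lt_card
        refine ⟨Finset.sdiff_subset, fun hh => ?_⟩
        have := hh hr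
        simp at this
      match u with
      | [] =>
        have h1 := IH _ hlt Φ (S \ [r].toFinset) rfl (fun σ hσ y => hΦ σ (fun i hi => hσ i
          (fun hh => hi (Finset.mem_sdiff.1 hh).1)) y) z hz
        rw [pth, one_mul]
        refine Submodule.span_mono ?_ h1
        rintro x (hx | ⟨p, hp, q, hq, hpq, rfl⟩)
        · exact Or.inl hx
        · exact Or.inr ⟨p, (Finset.mem_sdiff.1 hp).1, q, (Finset.mem_sdiff.1 hq).1, hpq, rfl⟩
      | [s] =>
        have hs : s ∈ S := huS s (by simp)
        have hrs : r ≠ s := by simpa using hu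
        have h1 := IH _ hlt (Φ ∘ₗ LinearMap.mulLeft ℚ (e r s)) (S \ [r, s].toFinset) rfl ?_ z hz
        · simp only [LinearMap.comp_apply, LinearMap.mulLeft_apply] at h1
          simp only [pth, mul_one]
          refine Submodule.span_le.2 ?_ h1
          rintro x (hx | ⟨p, hp, q, hq, hpq, rfl⟩)
          · rw [Set.mem_singleton_iff.1 hx, mul_one]
            exact Submodule.subset_span (Or.inr ⟨r, hr, s, hs, hrs, rfl⟩)
          · have hz : Φ (e r s * e p q) = 0 := by
              simp at hp hq
              obtain ⟨σ, h1, h2⟩ := exists_perm_supp (u := [r, s, p, q]) (v := [p, q, r, s])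
                (by simp; grind) (by
                  rw [List.perm_iff_count]; intro x; simp only [List.count_cons]; omega)
              simp only [List.map_cons, List.cons.injEq, List.map_nil] at h1
              have h3 := hΦ σ (fun i hi => h2 i (by
                intro hh; apply hi; simp at hh; grind)) (e r s * e p q)
              rw [map_mul, hρ, hρ, h1.1, h1.2.1, h1.2.2.1, h1.2.2.2.1, he.anti p q r s,
                map_neg] at h3
              have h4 : (2 : ℚ) • Φ (e r s * e p q) = 0 := by
                rw [two_smul]; nth_rewrite 1 [← h3]; simp
              simpa using h4
            rw [hz]; exact zero_mem _
        · intro σ hσ y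
          simp only [LinearMap.comp_apply, LinearMap.mulLeft_apply]
          rw [← hΦ σ ?_ (e r s * y), map_mul (ρ σ), hρ, hσ r (by simp), hσ s (by simp)]
          intro i hi
          exact hσ i (fun hh => hi (Finset.mem_sdiff.1 hh).1)
      | a :: b :: v =>
        have h1 := Phi_zero he hρ (Φ ∘ₗ LinearMap.mulRight ℚ z) hu ?_
        · simp only [LinearMap.comp_apply, LinearMap.mulRight_apply] at h1
          rw [h1]; exact zero_mem _
        · intro σ hσ y
          simp only [LinearMap.comp_apply, LinearMap.mulRight_apply]
          rw [← hΦ σ ?_ (y * z), map_mul (ρ σ), Esub_fix hρ ?_ hz]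
          · intro i hi
            refine hσ i ?_
            have := (Finset.mem_sdiff.1 hi).2
            simpa only [List.mem_toFinset] using this
          · intro i hi
            refine hσ i (fun hh => hi ?_)
            rcases List.mem_cons.1 hh with rfl | hh
            · exact hr
            · exact huS i hh

/-! ### Symmetrization -/

/-- The (unnormalized) symmetrization over permutations fixing `o`. -/
def Rey [Fintype ι] (ρ : Equiv.Perm ι → A →ₐ[ℚ] A) (o : ι) : A →ₗ[ℚ] A :=
  ∑ σ ∈ Finset.univ.filter (fun σ : Equiv.Perm ι => σ o = o), (ρ σ).toLinearMap

lemma Rey_apply [Fintype ι] (o : ι) (x : A) :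
    Rey ρ o x = ∑ σ ∈ Finset.univ.filter (fun σ : Equiv.Perm ι => σ o = o), ρ σ x := by
  simp [Rey, LinearMap.sum_apply]

lemma Rey_rho [Fintype ι] (hmul : ∀ σ τ x, ρ (σ * τ) x = ρ σ (ρ τ x)) {o : ι}
    {τ : Equiv.Perm ι} (hτ : τ o = o) (x : A) : Rey ρ o (ρ τ x) = Rey ρ o x := by
  have hτ' : τ⁻¹ o = o := by rw [Equiv.Perm.inv_eq_iff_eq]; exact hτ.symm
  rw [Rey_apply, Rey_apply]
  refine Finset.sum_bij' (fun σ _ => σ * τ) (fun σ _ => σ * τ⁻¹) ?_ ?_ ?_ ?_ ?_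
  · intro σ hσ; simp at hσ ⊢; rw [hτ, hσ]
  · intro σ hσ; simp at hσ ⊢; rw [show (Equiv.symm τ) o = o from hτ', hσ]
  · intro σ _; simp
  · intro σ _; simp
  · intro σ _; rw [hmul]

lemma Rey_mul [Fintype ι] {o : ι} {α : A} (hα : ∀ σ : Equiv.Perm ι, σ o = o → ρ σ α = α)
    (x : A) : Rey ρ o (α * x) = α * Rey ρ o x := by
  rw [Rey_apply, Rey_apply, Finset.mul_sum]
  refine Finset.sum_congr rfl fun σ hσ => ?_
  rw [map_mul, hα σ (by simpa using hσ)]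

lemma Rey_inv [Fintype ι] {o : ι} {α : A} (hα : ∀ σ : Equiv.Perm ι, σ o = o → ρ σ α = α) :
    ∃ c : ℚ, c ≠ 0 ∧ Rey ρ o α = c • α := by
  refine ⟨((Finset.univ.filter (fun σ : Equiv.Perm ι => σ o = o)).card : ℚ), ?_, ?_⟩
  · have : 0 < (Finset.univ.filter (fun σ : Equiv.Perm ι => σ o = o)).card :=
      Finset.card_pos.2 ⟨1, by simp⟩
    exact_mod_cast this.ne'
  · rw [Rey_apply, Finset.sum_congr rfl (fun σ hσ => hα σ (by simpa using hσ)),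
      Finset.sum_const, Nat.cast_smul_eq_nsmul]

lemma Rey_pth [Fintype ι] (hρ : ∀ σ i j, ρ σ (e i j) = e (σ i) (σ j))
    (hmul : ∀ σ τ x, ρ (σ * τ) x = ρ σ (ρ τ x)) {o : ι} {u v : List ι}
    (hu : (o :: u).Nodup) (hv : (o :: v).Nodup) (h : u.length = v.length) :
    Rey ρ o (pth e o u) = Rey ρ o (pth e o v) := by
  obtain ⟨σ, h1, h2⟩ := exists_perm_map_fix (w := [o]) hu hv h
  have ho := h2 o (by simp)
  rw [← Rey_rho hmul ho, rho_pth hρ, ho, h1]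

lemma Rey_e_pth [Fintype ι] (hρ : ∀ σ i j, ρ σ (e i j) = e (σ i) (σ j))
    (hmul : ∀ σ τ x, ρ (σ * τ) x = ρ σ (ρ τ x)) {o p q p' q' : ι} {v : List ι}
    (hu : (o :: p :: q :: v).Nodup) (hv : (o :: p' :: q' :: v).Nodup) :
    Rey ρ o (e p q * pth e o v) = Rey ρ o (e p' q' * pth e o v) := by
  obtain ⟨σ, h1, h2⟩ := exists_perm_map_fix (w := [o]) (u := p :: q :: v) (v := p' :: q' :: v)
    hu hv rfl
  have ho := h2 o (by simp)
  simp only [List.map_cons, List.cons.injEq] at h1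
  rw [← Rey_rho hmul ho, map_mul, hρ, rho_pth hρ, ho, h1.1, h1.2.1, h1.2.2]

lemma Rey_pth_mul [Fintype ι] (he : OSax e) (hρ : ∀ σ i j, ρ σ (e i j) = e (σ i) (σ j))
    (hmul : ∀ σ τ x, ρ (σ * τ) x = ρ σ (ρ τ x)) {o : ι} {u v : List ι}
    (hu : (o :: (u ++ v)).Nodup) :
    Rey ρ o (pth e o u * pth e o v) = bet u.length v.length • Rey ρ o (pth e o (u ++ v)) :=
  Phi_mul he hρ _ _ o u v rfl (List.nodup_cons.1 hu).2 (List.nodup_cons.1 hu).1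
    (fun σ hσ y => Rey_rho hmul (hσ o (List.nodup_cons.1 hu).1) y)

lemma solve_sum {κ : Type*} (B : Submodule ℚ A) (F : Finset κ) (f : κ → A) (y : A) (c : ℚ)
    (hc : c ≠ 0) (P : κ → Prop) (h1 : ∀ p ∈ F, P p → f p = c • y)
    (h2 : ∀ p ∈ F, ¬ P p → f p ∈ B) (hs : ∑ p ∈ F, f p ∈ B) (hw : ∃ p ∈ F, P p) : y ∈ B := by
  classical
  rw [← Finset.sum_filter_add_sum_filter_not F P] at hs
  have h3 : ∑ p ∈ F with ¬ P p, f p ∈ B := by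
    refine Submodule.sum_mem _ fun p hp => ?_
    rw [Finset.mem_filter] at hp
    exact h2 p hp.1 hp.2
  have h4 := (Submodule.add_mem_iff_left B h3).1 hs
  rw [Finset.sum_congr rfl (g := fun _ => c • y) (fun p hp => by
    rw [Finset.mem_filter] at hp; exact h1 p hp.1 hp.2), Finset.sum_const,
    ← Nat.cast_smul_eq_nsmul ℚ, smul_smul] at h4
  refine (Submodule.smul_mem_iff B (mul_ne_zero ?_ hc)).1 h4
  obtain ⟨p, hp, hP⟩ := hw
  have : 0 < (F.filter P).card := Finset.card_pos.2 ⟨p, by simp [hp, hP]⟩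
  exact_mod_cast this.ne'

lemma c_term_out [Fintype ι] (he : OSax e) (hρ : ∀ σ i j, ρ σ (e i j) = e (σ i) (σ j))
    (hmul : ∀ σ τ x, ρ (σ * τ) x = ρ σ (ρ τ x)) {o i j : ι} {u v : List ι}
    (hu : (o :: u).Nodup) (hv : (o :: j :: i :: v).Nodup) (hl : u.length = v.length + 2) :
    Rey ρ o (e i j * e j o * pth e o v) = (-bet 2 v.length) • Rey ρ o (pth e o u) := by
  have h1 : e i j * e j o = - pth e o [j, i] := by
    simp only [pth, mul_one]
    rw [he.anti, he.symm j o, he.symm i j]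
  rw [h1, neg_mul, map_neg, Rey_pth_mul he hρ hmul (by simpa using hv), neg_smul,
    Rey_pth hρ hmul hu (v := [j, i] ++ v) hv (by simp [hl])]
  rfl

lemma c_term_in (he : OSax e) {o i j : ι} {v : List ι} (h : i ∈ v ∨ j ∈ v) :
    e i j * e j o * pth e o v = 0 := by
  by_cases hj : j ∈ v
  · rw [mul_assoc, e_mul_pth_in he (List.mem_cons_of_mem _ hj) List.mem_cons_self, mul_zero]
  · have hi : i ∈ v := by tauto
    rw [he.symm i j, he.rel j i o, ← sub_mul, mul_assoc,
      e_mul_pth_in he (List.mem_cons_of_mem _ hi) List.mem_cons_self, mul_zero]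

end OSAbstract

section OSAbstract2

variable {A : Type*} [Ring A] [Algebra ℚ A] {n : ℕ} {e : Fin (n+1) → Fin (n+1) → A}
  {ρ : Equiv.Perm (Fin (n+1)) → A →ₐ[ℚ] A}

lemma exists_castSucc {n : ℕ} {x : Fin (n+1)} (h : x ≠ Fin.last n) :
    ∃ y : Fin n, x = y.castSucc := ⟨x.castPred h, by simp⟩

/-- Two distinct vertices form an ordered pair, up to exchange. -/
lemma exists_pair {n : ℕ} (P : Fin (n+1) → Prop) {x y : Fin (n+1)} (hx : x ≠ Fin.last n)
    (hy : y ≠ Fin.last n) (hxy : x ≠ y) (h1 : P x) (h2 : P y) :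
    ∃ p ∈ Finset.univ.filter (fun p : Fin n × Fin n => p.1 < p.2),
      P p.1.castSucc ∧ P p.2.castSucc := by
  obtain ⟨x, rfl⟩ := exists_castSucc hx
  obtain ⟨y, rfl⟩ := exists_castSucc hy
  have : x ≠ y := fun h => hxy (by rw [h])
  rcases lt_or_gt_of_ne this with h | h
  · exact ⟨(x, y), by simpa using h, h1, h2⟩
  · exact ⟨(y, x), by simpa using h, h2, h1⟩

theorem OS_main (he : OSax e) (hρ : ∀ σ i j, ρ σ (e i j) = e (σ i) (σ j))
    (hmul : ∀ σ τ x, ρ (σ * τ) x = ρ σ (ρ τ x))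
    (hgen : Esub e (Finset.univ : Finset (Fin (n+1))) = ⊤)
    (a m c : A)
    (ha : a = ∑ p ∈ Finset.univ.filter (fun p : Fin n × Fin n => p.1 < p.2),
      e p.1.castSucc p.2.castSucc)
    (hm : m = ∑ i : Fin n, e i.castSucc (Fin.last n))
    (hc : c = ∑ p ∈ Finset.univ.filter (fun p : Fin n × Fin n => p.1 < p.2),
      (e p.1.castSucc p.2.castSucc * e p.1.castSucc (Fin.last n)
      + e p.1.castSucc p.2.castSucc * e p.2.castSucc (Fin.last n)))
    (ia : ∀ σ : Equiv.Perm (Fin (n+1)), σ (Fin.last n) = Fin.last n → ρ σ a = a)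
    (im : ∀ σ : Equiv.Perm (Fin (n+1)), σ (Fin.last n) = Fin.last n → ρ σ m = m)
    (ic : ∀ σ : Equiv.Perm (Fin (n+1)), σ (Fin.last n) = Fin.last n → ρ σ c = c)
    (B : Subalgebra ℚ A) (Ba : a ∈ B) (Bm : m ∈ B) (Bc : c ∈ B) (x : A)
    (ix : ∀ σ : Equiv.Perm (Fin (n+1)), σ (Fin.last n) = Fin.last n → ρ σ x = x) : x ∈ B := by
  set o := Fin.last n with ho
  have ne_o : ∀ i : Fin n, i.castSucc ≠ o := fun i => (Fin.castSucc_lt_last i).ne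
  -- paths of even length
  have even : ∀ (t : ℕ) (u : List (Fin (n+1))), (o :: u).Nodup → u.length = 2 * t →
      Rey ρ o (pth e o u) ∈ B := by
    intro t
    induction t with
    | zero =>
      intro u hu hl
      have : u = [] := List.length_eq_zero_iff.mp (by omega)
      subst this
      obtain ⟨c, -, hc⟩ := Rey_inv (ρ := ρ) (o := o) (α := 1) (by simp)
      rw [pth, hc]
      exact B.smul_mem (one_mem B) c
    | succ t ih =>
      intro u hu hl
      match u, hl with
      | x :: y :: v, hl =>
        have hv : (o :: v).Nodup := by
          simp only [List.nodup_cons, List.mem_cons, not_or] at hu ⊢; tauto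
        have hlv : v.length = 2 * t := by simp only [List.length_cons] at hl; omega
        have h1 : Rey ρ o (c * pth e o v) ∈ B := by
          rw [Rey_mul ic]; exact mul_mem Bc (ih v hv hlv)
        rw [hc, Finset.sum_mul, map_sum] at h1
        refine solve_sum (Subalgebra.toSubmodule B) _ _ _ (-(2 * bet 2 v.length)) ?_
          (fun p => p.1.castSucc ∉ v ∧ p.2.castSucc ∉ v) ?_ ?_ h1 ?_
        · have := bet_two v.length
          intro h; linarith
        · intro p hp hP
          have hp' : p.1.castSucc ≠ p.2.castSucc := by
            simp only [Finset.mem_filter, Finset.mem_univ, true_and] at hp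
            intro h; exact hp.ne (Fin.castSucc_injective n h)
          have hov := (List.nodup_cons.1 hv)
          have n1 := (ne_o p.1).symm
          have n2 := (ne_o p.2).symm
          rw [add_mul, map_add, c_term_out he hρ hmul hu (v := v) (i := p.1.castSucc)
            (j := p.2.castSucc) ?_ (by simp), he.symm p.1.castSucc p.2.castSucc,
            c_term_out he hρ hmul hu (v := v) (j := p.1.castSucc)
            (i := p.2.castSucc) ?_ (by simp), ← add_smul]
          · congr 1; ring
          · simp only [List.nodup_cons, List.mem_cons, not_or]
            exact ⟨⟨n1, n2, hov.1⟩, ⟨hp', hP.1⟩, hP.2, hov.2⟩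
          · simp only [List.nodup_cons, List.mem_cons, not_or]
            exact ⟨⟨n2, n1, hov.1⟩, ⟨hp'.symm, hP.2⟩, hP.1, hov.2⟩
        · intro p hp hP
          have hP' : p.1.castSucc ∈ v ∨ p.2.castSucc ∈ v := by tauto
          rw [add_mul, c_term_in he hP', he.symm p.1.castSucc p.2.castSucc,
            c_term_in he hP'.symm]
          simp
        · simp only [List.nodup_cons, List.mem_cons, not_or] at hu
          exact exists_pair (fun z => z ∉ v) (x := x) (y := y) (Ne.symm hu.1.1)
            (Ne.symm hu.1.2.1) hu.2.1.1 hu.2.1.2 hu.2.2.1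
  have odd : ∀ (t : ℕ) (u : List (Fin (n+1))), (o :: u).Nodup → u.length = 2 * t + 1 →
      Rey ρ o (pth e o u) ∈ B := by
    intro t u hu hl
    match u, hl with
    | x :: v, hl =>
      have hv : (o :: v).Nodup := by
        simp only [List.nodup_cons, List.mem_cons, not_or] at hu ⊢; tauto
      have hlv : v.length = 2 * t := by simp only [List.length_cons] at hl; omega
      have h1 : Rey ρ o (m * pth e o v) ∈ B := by
        rw [Rey_mul im]; exact mul_mem Bm (even t v hv hlv)
      rw [hm, Finset.sum_mul, map_sum] at h1
      refine solve_sum (Subalgebra.toSubmodule B) _ _ _ 1 one_ne_zero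
        (fun p => p.castSucc ∉ v) ?_ ?_ h1 ?_
      · intro p _ hP
        have hov := (List.nodup_cons.1 hv)
        have n1 := (ne_o p).symm
        have hnd : (o :: p.castSucc :: v).Nodup := by
          simp only [List.nodup_cons, List.mem_cons, not_or]
          exact ⟨⟨n1, hov.1⟩, hP, hov.2⟩
        have h2 := Rey_pth_mul he hρ hmul (o := o) (u := [p.castSucc]) (v := v) hnd
        simp only [pth, mul_one] at h2
        rw [he.symm, h2, hlv, List.length_singleton, (bet_one_even t).1, one_smul, one_smul]
        exact Rey_pth hρ hmul hnd hu (by simp)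
      · intro p _ hP
        have hP' : p.castSucc ∈ v := by tauto
        rw [e_mul_pth_in he (List.mem_cons_of_mem _ hP') List.mem_cons_self]
        simp
      · simp only [List.nodup_cons, List.mem_cons, not_or] at hu
        obtain ⟨y, rfl⟩ := exists_castSucc (Ne.symm hu.1.1)
        exact ⟨y, Finset.mem_univ _, hu.2.1⟩
  have paths : ∀ (u : List (Fin (n+1))), (o :: u).Nodup → Rey ρ o (pth e o u) ∈ B := by
    intro u hu
    rcases Nat.even_or_odd' u.length with ⟨k, h | h⟩
    · exact even k u hu h
    · exact odd k u hu h
  have pathsT : ∀ (u : List (Fin (n+1))), (o :: u).Nodup → ∀ y ∈ Tsp e o u, Rey ρ o y ∈ B := by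
    intro u hu y hy
    induction hy using Submodule.span_induction with
    | mem y h =>
      obtain ⟨w, hw, rfl⟩ := h
      exact paths w ((hw.cons o).symm.nodup hu)
    | zero => simp
    | add x y _ _ hx hy => rw [map_add]; exact add_mem hx hy
    | smul c x _ hx => rw [map_smul]; exact B.smul_mem hx c
  have epaths : ∀ (v : List (Fin (n+1))) (p q : Fin (n+1)), (o :: p :: q :: v).Nodup →
      Rey ρ o (e p q * pth e o v) ∈ B := by
    intro v x y hu
    have hv : (o :: v).Nodup := by
      simp only [List.nodup_cons, List.mem_cons, not_or] at hu ⊢; tauto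
    have h1 : Rey ρ o (a * pth e o v) ∈ B := by
      rw [Rey_mul ia]; exact mul_mem Ba (paths v hv)
    rw [ha, Finset.sum_mul, map_sum] at h1
    have one : ∀ i j : Fin (n+1), i ∈ v → j ∉ v → j ≠ o →
        Rey ρ o (e i j * pth e o v) ∈ B := by
      intro i j hi hj hjo
      have h2 := e_mul_pth_join he (j := j) (v := []) (List.mem_cons_of_mem o hi)
      simp only [pth, mul_one] at h2
      refine pathsT _ ?_ _ h2
      have hp : (o :: (v ++ [j])).Perm (j :: o :: v) := List.perm_append_singleton j (o :: v)
      refine hp.symm.nodup ?_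
      rw [List.nodup_cons]
      refine ⟨?_, hv⟩
      simp only [List.mem_cons, not_or]; exact ⟨hjo, hj⟩
    refine solve_sum (Subalgebra.toSubmodule B) _ _ _ 1 one_ne_zero
      (fun p => p.1.castSucc ∉ v ∧ p.2.castSucc ∉ v) ?_ ?_ h1 ?_
    · intro p hp hP
      have hp' : p.1.castSucc ≠ p.2.castSucc := by
        simp only [Finset.mem_filter, Finset.mem_univ, true_and] at hp
        intro h; exact hp.ne (Fin.castSucc_injective n h)
      have hov := (List.nodup_cons.1 hv)
      rw [one_smul]
      refine Rey_e_pth hρ hmul ?_ hu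
      simp only [List.nodup_cons, List.mem_cons, not_or]
      exact ⟨⟨(ne_o p.1).symm, (ne_o p.2).symm, hov.1⟩, ⟨hp', hP.1⟩, hP.2, hov.2⟩
    · intro p hp hP
      by_cases c1 : p.1.castSucc ∈ v
      · by_cases c2 : p.2.castSucc ∈ v
        · rw [e_mul_pth_in he (List.mem_cons_of_mem _ c1) (List.mem_cons_of_mem _ c2)]
          simp
        · exact one _ _ c1 c2 (ne_o _)
      · have c2 : p.2.castSucc ∈ v := by tauto
        rw [he.symm]
        exact one _ _ c2 c1 (ne_o _)
    · simp only [List.nodup_cons, List.mem_cons, not_or] at hu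
      exact exists_pair (fun z => z ∉ v) (x := x) (y := y) (Ne.symm hu.1.1)
        (Ne.symm hu.1.2.1) hu.2.1.1 hu.2.1.2 hu.2.2.1
  -- everything
  have all : ∀ y ∈ Dsp e o Finset.univ, Rey ρ o y ∈ B := by
    intro y hy
    induction hy using Submodule.span_induction with
    | zero => simp
    | add x y _ _ hx hy => rw [map_add]; exact add_mem hx hy
    | smul c x _ hx => rw [map_smul]; exact B.smul_mem hx c
    | mem y h =>
      obtain ⟨u, z, hu, -, hz, rfl⟩ := h
      have h1 := Phi_Esub he hρ _ (Rey ρ o ∘ₗ LinearMap.mulLeft ℚ (pth e o u))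
        (Finset.univ \ (o :: u).toFinset) rfl ?_ z hz
      · simp only [LinearMap.comp_apply, LinearMap.mulLeft_apply, mul_one] at h1
        change _ ∈ Subalgebra.toSubmodule B
        refine Submodule.span_le.2 ?_ h1
        rintro w (hw | ⟨p, hp, q, hq, hpq, rfl⟩)
        · rw [Set.mem_singleton_iff.1 hw]; exact paths u hu
        · rw [pth_comm he, map_smul]
          refine Submodule.smul_mem _ _ (epaths u p q ?_)
          simp only [Finset.mem_sdiff, Finset.mem_univ, true_and, List.mem_toFinset,
            List.mem_cons, not_or] at hp hq
          have hou := List.nodup_cons.1 hu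
          simp only [List.nodup_cons, List.mem_cons, not_or]
          exact ⟨⟨Ne.symm hp.1, Ne.symm hq.1, hou.1⟩, ⟨hpq, hp.2⟩, hq.2, hou.2⟩
      · intro σ hσ y
        have hfix : ∀ i ∈ o :: u, σ i = i := by
          intro i hi
          apply hσ
          simp only [Finset.mem_sdiff, Finset.mem_univ, true_and, List.mem_toFinset, not_not]
          exact hi
        have hσo := hfix o List.mem_cons_self
        have hmap : u.map σ = u := by
          conv_rhs => rw [← List.map_id u]
          exact List.map_inj_left.2 fun i hi => hfix i (List.mem_cons_of_mem _ hi)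
        simp only [LinearMap.comp_apply, LinearMap.mulLeft_apply]
        rw [← Rey_rho hmul hσo (pth e o u * y), map_mul (ρ σ), rho_pth hρ, hσo, hmap]
  have hxE : x ∈ Esub e (Finset.univ : Finset (Fin (n+1))) := by rw [hgen]; trivial
  have hR := all x (Esub_le_Dsp he _ _ o rfl (Finset.mem_univ _) x hxE)
  obtain ⟨k, hk, hk2⟩ := Rey_inv ix
  rw [hk2] at hR
  exact (Submodule.smul_mem_iff (Subalgebra.toSubmodule B) hk).1 hR

lemma sum_pairs (f : Fin n → Fin n → A) (hf : ∀ i, f i i = 0) :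
    ∑ i, ∑ j, f i j = ∑ p ∈ Finset.univ.filter (fun p : Fin n × Fin n => p.1 < p.2),
      (f p.1 p.2 + f p.2 p.1) := by
  rw [← Finset.sum_product', Finset.univ_product_univ, Finset.sum_add_distrib,
    ← Finset.sum_filter_add_sum_filter_not Finset.univ (fun p : Fin n × Fin n => p.1 < p.2)]
  congr 1
  have h1 : ∑ p ∈ Finset.univ.filter (fun p : Fin n × Fin n => ¬ p.1 < p.2), f p.1 p.2
      = ∑ p ∈ Finset.univ.filter (fun p : Fin n × Fin n => p.2 < p.1), f p.1 p.2 := by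
    symm
    apply Finset.sum_subset
    · intro p hp
      simp only [Finset.mem_filter, Finset.mem_univ, true_and] at hp ⊢
      exact not_lt.2 hp.le
    · intro p hp hp'
      simp only [Finset.mem_filter, Finset.mem_univ, true_and] at hp hp'
      have : p.1 = p.2 := le_antisymm (not_lt.1 hp') (not_lt.1 hp)
      rw [this, hf]
  rw [h1]
  refine Finset.sum_bij' (fun p _ => p.swap) (fun p _ => p.swap) ?_ ?_ ?_ ?_ ?_ <;> simp

lemma m_inv (he : OSax e) (hρ : ∀ σ i j, ρ σ (e i j) = e (σ i) (σ j))
    (σ : Equiv.Perm (Fin (n+1))) (hσ : σ (Fin.last n) = Fin.last n) :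
    ρ σ (∑ i : Fin n, e i.castSucc (Fin.last n)) = ∑ i : Fin n, e i.castSucc (Fin.last n) := by
  have h : ∑ i : Fin n, e i.castSucc (Fin.last n) = ∑ i, e i (Fin.last n) := by
    rw [Fin.sum_univ_castSucc, he.diag, add_zero]
  rw [h, map_sum]
  simp only [hρ, hσ]
  exact Equiv.sum_comp σ (fun i => e i (Fin.last n))

lemma c_inv (he : OSax e) (hρ : ∀ σ i j, ρ σ (e i j) = e (σ i) (σ j))
    (σ : Equiv.Perm (Fin (n+1))) (hσ : σ (Fin.last n) = Fin.last n) (c : A)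
    (hc : c = ∑ p ∈ Finset.univ.filter (fun p : Fin n × Fin n => p.1 < p.2),
      (e p.1.castSucc p.2.castSucc * e p.1.castSucc (Fin.last n)
      + e p.1.castSucc p.2.castSucc * e p.2.castSucc (Fin.last n))) :
    ρ σ c = c := by
  have h : c = ∑ i, ∑ j, e i j * e i (Fin.last n) := by
    rw [Fin.sum_univ_castSucc]
    simp only [Fin.sum_univ_castSucc, he.sq, he.diag, mul_zero, add_zero, Finset.sum_const_zero]
    rw [hc, sum_pairs _ (by simp [he.diag])]
    refine Finset.sum_congr rfl fun p _ => ?_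
    rw [he.symm p.2.castSucc p.1.castSucc]
  rw [h, map_sum]
  simp only [map_sum, map_mul, hρ, hσ]
  rw [← Equiv.sum_comp σ (fun i => ∑ j, e i j * e i (Fin.last n))]
  refine Finset.sum_congr rfl fun i _ => ?_
  exact Equiv.sum_comp σ (fun j => e (σ i) j * e (σ i) (Fin.last n))

lemma a_inv (he : OSax e) (hρ : ∀ σ i j, ρ σ (e i j) = e (σ i) (σ j))
    (σ : Equiv.Perm (Fin (n+1))) (hσ : σ (Fin.last n) = Fin.last n) (a : A)
    (ha : a = ∑ p ∈ Finset.univ.filter (fun p : Fin n × Fin n => p.1 < p.2),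
      e p.1.castSucc p.2.castSucc) :
    ρ σ a = a := by
  have h0 : ∑ i : Fin n, ∑ j : Fin n, e i.castSucc j.castSucc = (2 : ℚ) • a := by
    rw [sum_pairs (fun i j : Fin n => e i.castSucc j.castSucc) (fun i => he.diag _), ha, two_smul, ← Finset.sum_add_distrib]
    refine Finset.sum_congr rfl fun p _ => ?_
    rw [he.symm p.2.castSucc p.1.castSucc]
  have h1 : ∑ i, ∑ j, e i j
      = (2 : ℚ) • a + (2 : ℚ) • ∑ i : Fin n, e i.castSucc (Fin.last n) := by
    rw [Fin.sum_univ_castSucc]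
    simp only [Fin.sum_univ_castSucc, he.diag, add_zero, Finset.sum_add_distrib]
    rw [h0, two_smul ℚ (∑ i : Fin n, e i.castSucc (Fin.last n)), add_assoc]
    simp only [he.symm (Fin.last n)]
  have h2 : ρ σ (∑ i, ∑ j, e i j) = ∑ i, ∑ j, e i j := by
    simp only [map_sum, hρ]
    rw [← Equiv.sum_comp σ (fun i => ∑ j, e i j)]
    exact Finset.sum_congr rfl fun i _ => Equiv.sum_comp σ (fun j => e (σ i) j)
  rw [h1, map_add, map_smul, map_smul, m_inv he hρ σ hσ] at h2
  have h3 := add_right_cancel h2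
  exact smul_right_injective A (two_ne_zero (α := ℚ)) h3

end OSAbstract2

lemma eOS_symm (n : ℕ) (i j : Fin (n+1)) : eOS n i j = eOS n j i := by
  by_cases h : i = j
  · subst h; rfl
  · rw [eOS, eOS, dif_neg h, dif_neg (Ne.symm h)]
    congr 1
    simp only [eAmb, Sym2.eq_swap (a := i) (b := j)]

lemma eOS_diag (n : ℕ) (i : Fin (n+1)) : eOS n i i = 0 := by simp [eOS]

lemma eOS_anti (n : ℕ) (i j k l : Fin (n+1)) :
    eOS n i j * eOS n k l = -(eOS n k l * eOS n i j) := by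
  by_cases h : i = j
  · subst h; simp [eOS_diag]
  by_cases h' : k = l
  · subst h'; simp [eOS_diag]
  rw [eOS, eOS, dif_neg h, dif_neg h', ← map_mul, ← map_mul, ← map_neg]
  congr 1
  exact eq_neg_of_add_eq_zero_left (ExteriorAlgebra.ι_add_mul_swap _ _)

lemma eOS_sq (n : ℕ) (i j : Fin (n+1)) : eOS n i j * eOS n i j = 0 := by
  by_cases h : i = j
  · subst h; simp [eOS_diag]
  · rw [eOS, dif_neg h, ← map_mul, eAmb, ExteriorAlgebra.ι_sq_zero, map_zero]

lemma eOS_rel (n : ℕ) (r a b : Fin (n+1)) :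
    eOS n r a * eOS n r b = eOS n r a * eOS n a b - eOS n r b * eOS n a b := by
  by_cases h1 : r = a
  · subst h1; simp [eOS_diag, eOS_sq]
  by_cases h2 : r = b
  · subst h2; rw [eOS_diag, eOS_symm n a r, eOS_sq]; simp
  by_cases h3 : a = b
  · subst h3; rw [eOS_diag, eOS_sq]; simp
  have h := RingQuot.mkAlgHom_rel ℚ (OSRel.rel (n := n) a b r h3 (Ne.symm h2) (Ne.symm h1))
  simp only [map_sub, map_add, map_mul, map_zero] at h
  have e1 : ∀ i j (hij : i ≠ j), RingQuot.mkAlgHom ℚ (OSRel n) (eAmb n i j hij) = eOS n i j :=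
    fun i j hij => by rw [eOS, dif_neg hij]
  simp only [e1] at h
  rw [eOS_symm n a r, eOS_symm n b r, eOS_anti n a b r b, eOS_anti n a b r a] at h
  rw [← sub_eq_zero, ← h]
  abel

lemma OSax_eOS (n : ℕ) : OSax (eOS n) :=
  ⟨eOS_symm n, eOS_diag n, eOS_anti n, eOS_sq n, eOS_rel n⟩

lemma OSperm_eOS (n : ℕ) (σ : Equiv.Perm (Fin (n+1))) (i j : Fin (n+1)) :
    OSperm n σ (eOS n i j) = eOS n (σ i) (σ j) := by
  by_cases h : i = j
  · subst h; simp [eOS_diag]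
  · have h' : σ i ≠ σ j := fun hh => h (σ.injective hh)
    rw [eOS, eOS, dif_neg h, dif_neg h', OSperm, RingQuot.liftAlgHom_mkAlgHom_apply,
      AlgHom.comp_apply, OSpermAmb_e]

lemma Esub_eOS (n : ℕ) : Esub (eOS n) (Finset.univ : Finset (Fin (n+1))) = ⊤ := by
  rw [eq_top_iff]
  rintro x -
  obtain ⟨y, rfl⟩ := RingQuot.mkAlgHom_surjective ℚ (OSRel n) x
  induction y using ExteriorAlgebra.induction with
  | algebraMap r => rw [AlgHom.commutes]; exact Subalgebra.algebraMap_mem _ r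
  | ι m =>
    induction m using Finsupp.induction_linear with
    | zero => simp
    | add f g hf hg => rw [map_add, map_add]; exact add_mem hf hg
    | single s c =>
      obtain ⟨s, hs⟩ := s
      induction s using Sym2.ind with
      | _ i j =>
      have hij : i ≠ j := fun h => hs (by simp [h])
      have h1 : (Finsupp.single (⟨s(i, j), hs⟩ : OSidx n) c)
          = c • Finsupp.single (⟨s(i, j), hs⟩ : OSidx n) (1 : ℚ) := by simp
      rw [h1, map_smul, map_smul]
      refine Subalgebra.smul_mem _ ?_ c
      have h2 := Esub_e (e := eOS n) (Finset.mem_univ i) (Finset.mem_univ j)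
      rw [eOS, dif_neg hij] at h2
      exact h2
  | mul x y hx hy => rw [map_mul]; exact mul_mem hx hy
  | add x y hx hy => rw [map_add]; exact add_mem hx hy

lemma OSperm_mul (n : ℕ) (σ τ : Equiv.Perm (Fin (n+1))) (x : OS n) :
    OSperm n (σ * τ) x = OSperm n σ (OSperm n τ x) := by
  have hx : x ∈ Esub (eOS n) (Finset.univ : Finset (Fin (n+1))) := by
    rw [Esub_eOS]; trivial
  induction hx using Algebra.adjoin_induction with
  | mem x h =>
    obtain ⟨i, _, j, _, rfl⟩ := h
    simp [OSperm_eOS]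
  | algebraMap c => simp
  | add x y _ _ hx hy => simp only [map_add, hx, hy]
  | mul x y _ _ hx hy => simp only [map_mul, hx, hy]

/-- For every integer `n ≥ 2`, the elements `a`, `m`, `g` are
`S_n`-invariant, and the `ℚ`-subalgebra of `OS_n` they generate is exactly `OS_n^{S_n}`. -/
theorem OSinv_generated_by_a_m_g (n : ℕ) (hn : 2 ≤ n) :
    (aOS n ∈ OSinv n ∧ mOS n ∈ OSinv n ∧ gOS n ∈ OSinv n) ∧
    Algebra.adjoin ℚ {aOS n, mOS n, gOS n} = OSinv n := by
  have he := OSax_eOS n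
  have hρ : ∀ σ i j, OSperm n σ (eOS n i j) = eOS n (σ i) (σ j) := OSperm_eOS n
  have ia : aOS n ∈ OSinv n := fun σ hσ => a_inv he hρ σ hσ _ rfl
  have im : mOS n ∈ OSinv n := fun σ hσ => m_inv he hρ σ hσ
  have ic : cOS n ∈ OSinv n := fun σ hσ => c_inv he hρ σ hσ _ rfl
  have ig : gOS n ∈ OSinv n := sub_mem (mul_mem ia im) (nsmul_mem ic _)
  refine ⟨⟨ia, im, ig⟩, le_antisymm ?_ ?_⟩
  · rw [Algebra.adjoin_le_iff]
    rintro x (rfl | rfl | rfl)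
    · exact ia
    · exact im
    · exact ig
  · intro x hx
    have Ba : aOS n ∈ Algebra.adjoin ℚ {aOS n, mOS n, gOS n} :=
      Algebra.subset_adjoin (by simp)
    have Bm : mOS n ∈ Algebra.adjoin ℚ {aOS n, mOS n, gOS n} :=
      Algebra.subset_adjoin (by simp)
    have Bg : gOS n ∈ Algebra.adjoin ℚ {aOS n, mOS n, gOS n} :=
      Algebra.subset_adjoin (by simp)
    have Bc : cOS n ∈ Algebra.adjoin ℚ {aOS n, mOS n, gOS n} := by
      have h1 : (((n + 1) / 2 : ℕ) : ℚ) • cOS n = aOS n * mOS n - gOS n := by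
        rw [gOS, Nat.cast_smul_eq_nsmul, sub_sub_cancel]
      have h2 : (((n + 1) / 2 : ℕ) : ℚ) • cOS n ∈
          Subalgebra.toSubmodule (Algebra.adjoin ℚ {aOS n, mOS n, gOS n}) := by
        rw [h1, Subalgebra.mem_toSubmodule]; exact sub_mem (mul_mem Ba Bm) Bg
      refine (Submodule.smul_mem_iff _ ?_).1 h2
      have : (n + 1) / 2 ≠ 0 := by omega
      exact_mod_cast this
    exact OS_main he hρ (OSperm_mul n) (Esub_eOS n) (aOS n) (mOS n) (cOS n) rfl rfl rfl
      ia im ic _ Ba Bm Bc x hx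

end
end
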